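/- arXiv:1102.2361 — 5 statements merged into one kernel-verified Lean document; each statement's English description precedes it below -/
import Mathlib

section
/- Let α > 0 and let x : ℕ → ℝⁿ satisfy x_i(t+1) = Σ_{j=1}^n a_{ij}(t) x_j(t) for all i and t, where for all i, j, t: a_{ij}(t) ≥ 0, Σ_{j=1}^n a_{ij}(t) = 1, a_{ij}(t) > 0 implies a_{ij}(t) ≥ α, and a_{ii}(t) ≥ α. Assume the discrete cut-balance condition: for every t and every nonempty proper subset S of {1,…,n}, there exist i ∈ S and j ∉ S with a_{ij}(t) > 0 if and only if there exist i' ∈ S and j' ∉ S with a_{j'i'}(t) > 0. Then for every i the limit x_i* = lim_{t→∞} x_i(t) exists and x_i* ∈ [min_j x_j(0), max_j x_j(0)]. -/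
open Filter

/-!
Call a set of agents absorbing for a weight matrix if its members put no weight outside it. By cut
balance, the sets that are absorbing at all late times are closed under complements as well as
intersections, so a minimal such set `C` containing a given agent has no nonempty proper subset
which is eventually absorbing.

Once `C` is absorbing, the maximum of `x` over `C` is nonincreasing, hence converges to some `L`.
Suppose an agent of `C` lies `β` below this maximum, and let `S` consist of that agent. The bound on
`S` persists until `S` first puts weight outside; by cut balance an agent of `C \ S` puts weight at
least `α` on `S` at that time, so one step later a larger set lies `α * β` below the former maximum.
Iterating, all of `C` ends up `α ^ (#C - 1) * β` below the former maximum. As the maximum over `C`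
never falls below `L`, the distance `β` of any agent of `C` to the maximum tends to `0`.
-/

open scoped Matrix Topology
open Finset Matrix

variable {ι R : Type*}

section Absorbing

/-- A set of indices is absorbing for a weight matrix if its rows are supported in its columns. For
a transition matrix these are the closed classes of the Markov chain. -/
def IsAbsorbing [Zero R] (A : Matrix ι ι R) (S : Finset ι) : Prop :=
  ∀ i ∈ S, ∀ j ∉ S, A i j = 0

/-- The cut-balance condition: weight crosses the boundary of a set in one direction if and only if
it crosses in the other one. It is stated through the absence of crossing weight, with the reverse
direction expressed by the transpose; `∅` and the full set satisfy both sides trivially. -/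
def IsCutBalanced [Zero R] (A : Matrix ι ι R) : Prop :=
  ∀ S : Finset ι, IsAbsorbing A S ↔ IsAbsorbing Aᵀ S

variable [Zero R] {A : Matrix ι ι R} {S T : Finset ι}

theorem not_isAbsorbing_iff_exists_pos [PartialOrder R] (hA : ∀ i j, 0 ≤ A i j) :
    ¬ IsAbsorbing A S ↔ ∃ i ∈ S, ∃ j ∉ S, 0 < A i j := by
  simp only [IsAbsorbing, not_forall, exists_prop, (hA _ _).lt_iff_ne']

theorem IsAbsorbing.inter [DecidableEq ι] (hS : IsAbsorbing A S) (hT : IsAbsorbing A T) :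
    IsAbsorbing A (S ∩ T) := by
  intro i hi j hj
  obtain ⟨hiS, hiT⟩ := mem_inter.1 hi
  by_cases hjS : j ∈ S
  · exact hT i hiT j fun hjT => hj (mem_inter.2 ⟨hjS, hjT⟩)
  · exact hS i hiS j hjS

theorem isAbsorbing_univ [Fintype ι] : IsAbsorbing A univ := fun _ _ j hj => absurd (mem_univ j) hj

section Complement

variable [Fintype ι] [DecidableEq ι]

theorem isAbsorbing_compl_iff_transpose : IsAbsorbing A Sᶜ ↔ IsAbsorbing Aᵀ S := by
  simp only [IsAbsorbing, mem_compl, not_not, transpose_apply]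
  exact ⟨fun h i hi j hj => h j hj i hi, fun h i hi j hj => h j hj i hi⟩

theorem IsCutBalanced.isAbsorbing_compl_iff (hA : IsCutBalanced A) :
    IsAbsorbing A Sᶜ ↔ IsAbsorbing A S :=
  isAbsorbing_compl_iff_transpose.trans (hA S).symm

theorem isCutBalanced_of_exists_pos_iff [PartialOrder R] (hA : ∀ i j, 0 ≤ A i j)
    (hcut : ∀ S : Finset ι, S.Nonempty → S ≠ univ →
      ((∃ i ∈ S, ∃ j ∈ Sᶜ, 0 < A i j) ↔ ∃ i ∈ S, ∃ j ∈ Sᶜ, 0 < A j i)) :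
    IsCutBalanced A := by
  intro S
  rcases S.eq_empty_or_nonempty with rfl | hne
  · simp [IsAbsorbing]
  rcases eq_or_ne S univ with rfl | huniv
  · exact iff_of_true isAbsorbing_univ isAbsorbing_univ
  rw [← not_iff_not, not_isAbsorbing_iff_exists_pos hA,
    not_isAbsorbing_iff_exists_pos (A := Aᵀ) fun i j => hA j i]
  simpa only [mem_compl, transpose_apply] using hcut S hne huniv

end Complement

theorem exists_minimal_eventually_isAbsorbing [Finite ι] {τ : Type*} {l : Filter τ}
    {A : τ → Matrix ι ι R} (hA : ∀ t, IsCutBalanced (A t)) (i : ι) :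
    ∃ C : Finset ι, i ∈ C ∧ (∀ᶠ t in l, IsAbsorbing (A t) C) ∧
      ∀ S ⊂ C, S.Nonempty → ∃ᶠ t in l, ¬ IsAbsorbing (A t) S := by
  classical
  have := Fintype.ofFinite ι
  obtain ⟨C, ⟨hiC, hC⟩, hmin⟩ := exists_minimal_of_wellFoundedLT
    (fun C : Finset ι => i ∈ C ∧ ∀ᶠ t in l, IsAbsorbing (A t) C)
    ⟨univ, mem_univ i, .of_forall fun _ => isAbsorbing_univ⟩
  refine ⟨C, hiC, hC, fun S hSC hne hfreq => ?_⟩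
  have hS : ∀ᶠ t in l, IsAbsorbing (A t) S := hfreq.mono fun _ => not_not.1
  by_cases hiS : i ∈ S
  · exact hSC.2 (hmin ⟨hiS, hS⟩ hSC.1)
  · have hdiff : ∀ᶠ t in l, IsAbsorbing (A t) (C ∩ Sᶜ) := by
      filter_upwards [hC, hS] with t hCt hSt
      exact hCt.inter ((hA t).isAbsorbing_compl_iff.2 hSt)
    have hCS : C ⊆ C ∩ Sᶜ :=
      hmin ⟨mem_inter.2 ⟨hiC, mem_compl.2 hiS⟩, hdiff⟩ inter_subset_left
    obtain ⟨s, hs⟩ := hne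
    exact mem_compl.1 (mem_inter.1 (hCS (hSC.1 hs))).2 hs

end Absorbing

section OneStep

variable [Fintype ι] [DecidableEq ι] [Ring R] [PartialOrder R] [IsOrderedRing R]
  {A : Matrix ι ι R} {C S : Finset ι} {v : ι → R} {α β M : R}

theorem mulVec_le_sub_mul (hA : A ∈ rowStochastic R ι) (hC : IsAbsorbing A C)
    (hM : ∀ j ∈ C, v j ≤ M) {i : ι} (hi : i ∈ C) (k : ι) :
    (A *ᵥ v) i ≤ M - A i k * (M - v k) := by
  have hgap : M - (A *ᵥ v) i = ∑ j, A i j * (M - v j) := by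
    simp only [mul_sub, sum_sub_distrib, ← sum_mul, sum_row_of_mem_rowStochastic hA, one_mul,
      mulVec, dotProduct]
  have hnonneg (j : ι) : 0 ≤ A i j * (M - v j) := by
    by_cases hj : j ∈ C
    · exact mul_nonneg (hA.1 i j) (sub_nonneg.2 (hM j hj))
    · rw [hC i hi j hj, zero_mul]
  rw [le_sub_comm, hgap]
  exact single_le_sum (fun j _ => hnonneg j) (mem_univ k)

theorem mulVec_le (hA : A ∈ rowStochastic R ι) (hC : IsAbsorbing A C) (hM : ∀ j ∈ C, v j ≤ M) :
    ∀ i ∈ C, (A *ᵥ v) i ≤ M := fun i hi =>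
  (mulVec_le_sub_mul hA hC hM hi i).trans
    (sub_le_self M (mul_nonneg (hA.1 i i) (sub_nonneg.2 (hM i hi))))

/-- The weight matrices of a discrete-time cut-balanced consensus system: row stochastic and
cut-balanced, with positive weights and diagonal weights at least `α`. -/
structure IsConsensusMatrix (α : R) (A : Matrix ι ι R) : Prop where
  mem_rowStochastic : A ∈ rowStochastic R ι
  le_of_pos : ∀ i j, 0 < A i j → α ≤ A i j
  le_diag : ∀ i, α ≤ A i i
  isCutBalanced : IsCutBalanced A

theorem IsConsensusMatrix.exists_insert_mulVec_le_sub (hA : IsConsensusMatrix α A)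
    (hC : IsAbsorbing A C) (hSC : S ⊆ C) (hS : ¬ IsAbsorbing A S) (hβ : 0 ≤ β)
    (hM : ∀ j ∈ C, v j ≤ M) (hvS : ∀ j ∈ S, v j ≤ M - β) :
    ∃ j ∈ C, j ∉ S ∧ ∀ i ∈ insert j S, (A *ᵥ v) i ≤ M - α * β := by
  have hdrop {i k : ι} (hi : i ∈ C) (hk : k ∈ S) (hik : α ≤ A i k) :
      (A *ᵥ v) i ≤ M - α * β :=
    (mulVec_le_sub_mul hA.mem_rowStochastic hC hM hi k).trans <| sub_le_sub_left
      (mul_le_mul hik (le_sub_comm.1 (hvS k hk)) hβ (hA.mem_rowStochastic.1 i k)) M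
  obtain ⟨j, hjS, k, hkS, hjk⟩ : ∃ j ∈ Sᶜ, ∃ k ∉ Sᶜ, 0 < A j k :=
    (not_isAbsorbing_iff_exists_pos hA.mem_rowStochastic.1).1
      (mt hA.isCutBalanced.isAbsorbing_compl_iff.1 hS)
  rw [mem_compl, not_not] at hkS
  have hjC : j ∈ C := by
    by_contra hjC
    exact hjk.ne' (hA.isCutBalanced.isAbsorbing_compl_iff.2 hC j (mem_compl.2 hjC) k
      fun hk => mem_compl.1 hk (hSC hkS))
  refine ⟨j, hjC, mem_compl.1 hjS, forall_mem_insert .. |>.2 ⟨?_, fun i hi => ?_⟩⟩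
  · exact hdrop hjC hkS (hA.le_of_pos j k hjk)
  · exact hdrop (hSC hi) hi (hA.le_diag i)

end OneStep

section Trajectory

variable [Fintype ι] [DecidableEq ι] [Ring R] [PartialOrder R] [IsOrderedRing R]
  {A : ℕ → Matrix ι ι R} {x : ℕ → ι → R} {C S : Finset ι} {α β M : R} {s t : ℕ}

theorem trajectory_le (hA : ∀ t, A t ∈ rowStochastic R ι) (hx : ∀ t, x (t + 1) = A t *ᵥ x t)
    (hst : s ≤ t) (hC : ∀ r ∈ Set.Ico s t, IsAbsorbing (A r) C) (hM : ∀ j ∈ C, x s j ≤ M) :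
    ∀ i ∈ C, x t i ≤ M := by
  induction t, hst using Nat.le_induction with
  | base => exact hM
  | succ t hst ih =>
    rw [hx]
    exact mulVec_le (hA t) (hC t ⟨hst, t.lt_succ_self⟩)
      (ih fun r hr => hC r ⟨hr.1, hr.2.trans t.lt_succ_self⟩)

theorem trajectory_mem_Icc (hA : ∀ t, A t ∈ rowStochastic R ι)
    (hx : ∀ t, x (t + 1) = A t *ᵥ x t) {m : R} (h₀ : ∀ i, x 0 i ∈ Set.Icc m M) (t : ℕ) (i : ι) :
    x t i ∈ Set.Icc m M := by
  have hx_neg (t : ℕ) : (-x) (t + 1) = A t *ᵥ (-x) t := by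
    simp only [Pi.neg_apply, hx, mulVec_neg]
  refine ⟨neg_le_neg_iff.1 ?_, ?_⟩
  · exact trajectory_le hA hx_neg t.zero_le (fun _ _ => isAbsorbing_univ)
      (fun j _ => neg_le_neg (h₀ j).1) i (mem_univ i)
  · exact trajectory_le hA hx t.zero_le (fun _ _ => isAbsorbing_univ)
      (fun j _ => (h₀ j).2) i (mem_univ i)

theorem exists_insert_trajectory_le_sub (hA : ∀ t, IsConsensusMatrix α (A t))
    (hx : ∀ t, x (t + 1) = A t *ᵥ x t) (hC : ∀ t, IsAbsorbing (A t) C) (hSC : S ⊆ C)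
    (hS : ∃ᶠ t in atTop, ¬ IsAbsorbing (A t) S) (hβ : 0 ≤ β)
    (hM : ∀ j ∈ C, x s j ≤ M) (hxS : ∀ j ∈ S, x s j ≤ M - β) :
    ∃ t ≥ s, ∃ j ∈ C, j ∉ S ∧ ∀ i ∈ insert j S, x t i ≤ M - α * β := by
  classical
  have hexit : ∃ t, s ≤ t ∧ ¬ IsAbsorbing (A t) S := frequently_atTop.1 hS s
  obtain ⟨hst, hout⟩ := Nat.find_spec hexit
  have hbefore (r : ℕ) (hr : r ∈ Set.Ico s (Nat.find hexit)) : IsAbsorbing (A r) S :=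
    not_not.1 fun h => Nat.find_min hexit hr.2 ⟨hr.1, h⟩
  have hA_stoch (t : ℕ) := (hA t).mem_rowStochastic
  refine ⟨Nat.find hexit + 1, hst.trans (Nat.le_succ _), ?_⟩
  rw [hx]
  exact (hA _).exists_insert_mulVec_le_sub (hC _) hSC hout hβ
    (trajectory_le hA_stoch hx hst (fun r _ => hC r) hM)
    (trajectory_le hA_stoch hx hst hbefore hxS)

theorem exists_trajectory_le_sub_pow_card_sdiff (hα : 0 ≤ α)
    (hA : ∀ t, IsConsensusMatrix α (A t)) (hx : ∀ t, x (t + 1) = A t *ᵥ x t)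
    (hC : ∀ t, IsAbsorbing (A t) C)
    (hmin : ∀ S ⊂ C, S.Nonempty → ∃ᶠ t in atTop, ¬ IsAbsorbing (A t) S)
    (hSC : S ⊆ C) (hne : S.Nonempty) (hβ : 0 ≤ β)
    (hM : ∀ j ∈ C, x s j ≤ M) (hxS : ∀ j ∈ S, x s j ≤ M - β) :
    ∃ t, ∀ i ∈ C, x t i ≤ M - α ^ #(C \ S) * β := by
  induction hk : #(C \ S) generalizing S s β with
  | zero =>
    obtain rfl : S = C := hSC.antisymm (sdiff_eq_empty_iff_subset.1 (card_eq_zero.1 hk))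
    exact ⟨s, by simpa using hxS⟩
  | succ k ih =>
    have hSC' : S ⊂ C := hSC.ssubset_of_ne (by rintro rfl; simp at hk)
    obtain ⟨t, hst, j, hjC, hjS, hxt⟩ :=
      exists_insert_trajectory_le_sub hA hx hC hSC (hmin S hSC' hne) hβ hM hxS
    have hk' : #(C \ insert j S) = k := by
      rw [sdiff_insert, card_erase_of_mem (mem_sdiff.2 ⟨hjC, hjS⟩), hk, Nat.add_sub_cancel]
    rw [pow_succ, mul_assoc]
    exact ih (insert_subset hjC hSC) (insert_nonempty j S) (mul_nonneg hα hβ)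
      (trajectory_le (fun t => (hA t).mem_rowStochastic) hx hst (fun r _ => hC r) hM) hxt hk'

end Trajectory

section Convergence

variable [Fintype ι] [DecidableEq ι] {A : ℕ → Matrix ι ι ℝ} {x : ℕ → ι → ℝ} {C : Finset ι} {α : ℝ}

theorem trajectory_mem_Icc_iInf_iSup (hA : ∀ t, A t ∈ rowStochastic ℝ ι)
    (hx : ∀ t, x (t + 1) = A t *ᵥ x t) (t : ℕ) (i : ι) :
    x t i ∈ Set.Icc (⨅ j, x 0 j) (⨆ j, x 0 j) :=
  trajectory_mem_Icc hA hx (fun j => ⟨ciInf_le (Set.finite_range (x 0)).bddBelow j,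
    le_ciSup (Set.finite_range (x 0)).bddAbove j⟩) t i

theorem exists_tendsto_sup'_trajectory (hA : ∀ t, A t ∈ rowStochastic ℝ ι)
    (hx : ∀ t, x (t + 1) = A t *ᵥ x t) (hC : ∀ t, IsAbsorbing (A t) C) (hne : C.Nonempty) :
    ∃ L, Tendsto (fun t => C.sup' hne (x t)) atTop (𝓝 L) ∧ ∀ t, L ≤ C.sup' hne (x t) := by
  have hanti : Antitone fun t => C.sup' hne (x t) := antitone_nat_of_succ_le fun t => by
    rw [hx]
    exact sup'_le _ _ (mulVec_le (hA t) (hC t) fun j hj => le_sup' (x t) hj)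
  have hbdd : BddBelow (Set.range fun t => C.sup' hne (x t)) := by
    refine ⟨⨅ j, x 0 j, Set.forall_mem_range.2 fun t => ?_⟩
    obtain ⟨i, hi⟩ := hne
    exact (trajectory_mem_Icc_iInf_iSup hA hx t i).1.trans (le_sup' (x t) hi)
  exact ⟨_, tendsto_atTop_ciInf hanti hbdd, ciInf_le hbdd⟩

theorem exists_forall_mem_tendsto_of_isAbsorbing (hα : 0 < α)
    (hA : ∀ t, IsConsensusMatrix α (A t)) (hx : ∀ t, x (t + 1) = A t *ᵥ x t)
    (hC : ∀ t, IsAbsorbing (A t) C)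
    (hmin : ∀ S ⊂ C, S.Nonempty → ∃ᶠ t in atTop, ¬ IsAbsorbing (A t) S) :
    ∃ L, ∀ i ∈ C, Tendsto (fun t => x t i) atTop (𝓝 L) := by
  rcases C.eq_empty_or_nonempty with rfl | hne
  · exact ⟨0, by simp⟩
  obtain ⟨L, hL, hL_le⟩ :=
    exists_tendsto_sup'_trajectory (fun t => (hA t).mem_rowStochastic) hx hC hne
  refine ⟨L, fun i hi => ?_⟩
  set c : ℝ := α ^ #(C \ {i})
  have hc : 0 < c := pow_pos hα _
  have hgap (t : ℕ) : c * (C.sup' hne (x t) - x t i) ≤ C.sup' hne (x t) - L := by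
    obtain ⟨u, hu⟩ := exists_trajectory_le_sub_pow_card_sdiff (s := t)
      (M := C.sup' hne (x t)) hα.le hA hx hC hmin (singleton_subset_iff.2 hi) (singleton_nonempty i)
      (sub_nonneg.2 (le_sup' (x t) hi)) (fun j hj => le_sup' (x t) hj) (by simp)
    exact le_sub_comm.1 ((hL_le u).trans (sup'_le _ _ hu))
  have hlower : Tendsto (fun t => C.sup' hne (x t) - (C.sup' hne (x t) - L) / c) atTop (𝓝 L) := by
    simpa using hL.sub ((hL.sub_const L).div_const c)
  refine tendsto_of_tendsto_of_tendsto_of_le_of_le hlower hL (fun t => ?_) fun t => le_sup' (x t) hi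
  exact sub_le_comm.1 ((le_div_iff₀' hc).2 (hgap t))

theorem exists_mem_forall_mem_tendsto (hα : 0 < α) (hA : ∀ t, IsConsensusMatrix α (A t))
    (hx : ∀ t, x (t + 1) = A t *ᵥ x t) (i : ι) :
    ∃ C : Finset ι, i ∈ C ∧ (∀ᶠ t in atTop, IsAbsorbing (A t) C) ∧
      ∃ L, ∀ j ∈ C, Tendsto (fun t => x t j) atTop (𝓝 L) := by
  obtain ⟨C, hiC, hC, hmin⟩ := exists_minimal_eventually_isAbsorbing (l := atTop)
    (fun t => (hA t).isCutBalanced) i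
  obtain ⟨T, hT⟩ := eventually_atTop.1 hC
  obtain ⟨L, hL⟩ := exists_forall_mem_tendsto_of_isAbsorbing (A := fun t => A (t + T))
    (x := fun t => x (t + T)) hα (fun t => hA (t + T))
    (fun t => by rw [add_right_comm, hx]) (fun t => hT _ (Nat.le_add_left T t))
    (fun S hSC hne => by
      have hS := hmin S hSC hne
      rwa [← map_add_atTop_eq_nat T, frequently_map] at hS)
  exact ⟨C, hiC, hC, L, fun j hj => (tendsto_add_atTop_iff_nat T).1 (hL j hj)⟩

theorem discrete_cutBalance_convergence_general (hα : 0 < α)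
    (hA : ∀ t, IsConsensusMatrix α (A t)) (hx : ∀ t, x (t + 1) = A t *ᵥ x t) :
    ∃ L : ι → ℝ, (∀ i, Tendsto (fun t => x t i) atTop (𝓝 (L i))) ∧
      (∀ i, L i ∈ Set.Icc (⨅ j, x 0 j) (⨆ j, x 0 j)) ∧
      ∀ i j, (∃ᶠ t in atTop, 0 < A t i j) → L i = L j := by
  choose C hiC hC L hL using exists_mem_forall_mem_tendsto hα hA hx
  have hlim (i : ι) : Tendsto (fun t => x t i) atTop (𝓝 (L i)) := hL i i (hiC i)
  have hmem := trajectory_mem_Icc_iInf_iSup (fun t => (hA t).mem_rowStochastic) hx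
  refine ⟨L, hlim, fun i => isClosed_Icc.mem_of_tendsto (hlim i) (.of_forall fun t => hmem t i),
    fun i j hij => ?_⟩
  have hjC : j ∈ C i := by
    by_contra hjC
    obtain ⟨t, hpos, hCt⟩ := (hij.and_eventually (hC i)).exists
    exact hpos.ne' (hCt i (hiC i) j hjC)
  exact tendsto_nhds_unique (hL i j hjC) (hlim j)

end Convergence

/-- (Discrete time.) A discrete-time consensus system with
row-stochastic weights, lower-bounded positive weights, positive diagonal and
the discrete cut-balance condition converges: each `x_i(t)` has a limit in
`[min_j x_j(0), max_j x_j(0)]`. -/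
theorem discrete_cutBalance_convergence
    (n : ℕ) (hn : 1 ≤ n) (α : ℝ) (hα : 0 < α)
    (a : ℕ → Fin n → Fin n → ℝ)
    (ha_nonneg : ∀ t i j, 0 ≤ a t i j)
    (ha_stoch : ∀ t i, (∑ j, a t i j) = 1)
    (ha_lb : ∀ t i j, 0 < a t i j → α ≤ a t i j)
    (ha_diag : ∀ t i, α ≤ a t i i)
    (hcb : ∀ t : ℕ, ∀ S : Finset (Fin n), S.Nonempty → S ≠ Finset.univ →
      ((∃ i ∈ S, ∃ j ∈ Sᶜ, 0 < a t i j) ↔ (∃ i ∈ S, ∃ j ∈ Sᶜ, 0 < a t j i)))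
    (x : ℕ → Fin n → ℝ)
    (hx : ∀ t i, x (t + 1) i = ∑ j, a t i j * x t j) :
    ∀ i, ∃ L : ℝ, Tendsto (fun t => x t i) atTop (nhds L) ∧
      (⨅ j, x 0 j) ≤ L ∧ L ≤ ⨆ j, x 0 j := by
  have hA (t : ℕ) : IsConsensusMatrix α (of (a t)) :=
    ⟨mem_rowStochastic_iff_sum.2 ⟨ha_nonneg t, ha_stoch t⟩, ha_lb t, ha_diag t,
      isCutBalanced_of_exists_pos_iff (ha_nonneg t) (hcb t)⟩
  obtain ⟨L, hlim, hmem, -⟩ := discrete_cutBalance_convergence_general hα hA fun t => funext (hx t)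
  exact fun i => ⟨L i, hlim i, hmem i⟩
end

section
/- Let α > 0 and let x : ℕ → ℝⁿ satisfy x_i(t+1) = Σ_{j=1}^n a_{ij}(t) x_j(t) for all i and t, where for all i, j, t: a_{ij}(t) ≥ 0, Σ_{j=1}^n a_{ij}(t) = 1, a_{ij}(t) > 0 implies a_{ij}(t) ≥ α, and a_{ii}(t) ≥ α. Assume the discrete cut-balance condition: for every t and every nonempty proper subset S of {1,…,n}, there exist i ∈ S and j ∉ S with a_{ij}(t) > 0 if and only if there exist i' ∈ S and j' ∉ S with a_{j'i'}(t) > 0. Let G be the directed graph on {1,…,n} with edge (j,i) if and only if a_{ij}(t) > 0 for infinitely many t. Then every weakly connected component of G is strongly connected, and if i and j belong to the same weakly connected component of G, then lim_{t→∞} x_i(t) = lim_{t→∞} x_j(t). -/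
open Filter

/-!
Cut balance of a digraph says that an edge entering a set of nodes forces an edge leaving it. No
edge leaves the set of nodes reachable from a given node, so none enters it, and reachability is
symmetric. Cut balance passes from the digraphs at each instant to the digraph `G` of edges active
infinitely often, hence weak and strong connectivity agree in `G`.

For the limits, wait until only edges of `G` are active. Each component then evolves as a consensus
system of its own, on which the minimum of the values increases and the maximum decreases. Suppose
all values are at least `b` and those on `S` are at least `b + δ`. The latter bound persists until
`S` is first influenced from outside; at that instant cut balance makes `S` influence some agent
outside, so one step later the values on a strictly larger set are at least `b + α δ`. Starting from
a maximizer, all values eventually exceed the minimum by a fixed fraction of the spread, and in the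
limit this forces the spread to vanish.
-/

open Relation Set

theorem frequently_exists_iff_of_finite {ι τ : Type*} [Finite ι] {l : Filter τ}
    {p : ι → τ → Prop} : (∃ᶠ t in l, ∃ i, p i t) ↔ ∃ i, ∃ᶠ t in l, p i t := by
  simp only [Filter.Frequently, not_exists, eventually_all, not_forall]

section CutBalance

variable {V : Type*}

/-- Cut balance of the digraph with edges `R u v` from `u` to `v`: every node set with an incoming
edge has an outgoing edge. The converse implication for `S` is this one for its complement. -/
def CutBalanced (R : V → V → Prop) : Prop :=
  ∀ S : Set V, (∃ u ∉ S, ∃ v ∈ S, R u v) → ∃ u ∈ S, ∃ v ∉ S, R u v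

theorem exists_entering_edge_of_reflTransGen {R : V → V → Prop} {S : Set V} {u v : V}
    (huv : ReflTransGen R u v) (hu : u ∉ S) (hv : v ∈ S) : ∃ p ∉ S, ∃ q ∈ S, R p q := by
  induction huv with
  | refl => exact absurd hv hu
  | @tail p q _ hpq ih =>
    by_cases hp : p ∈ S
    · exact ih hp
    · exact ⟨p, hp, q, hv, hpq⟩

theorem reflTransGen_restrict {R : V → V → Prop} {C : Set V}
    (hC : ∀ u ∈ C, ∀ v, R u v → v ∈ C) {u v : C} (huv : ReflTransGen R u v) :
    ReflTransGen (fun p q : C ↦ R p q) u v := by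
  suffices ∀ w, ReflTransGen R u w → ∃ hw : w ∈ C, ReflTransGen (fun p q : C ↦ R p q) u ⟨w, hw⟩ from
    (this v huv).2
  intro w huw
  induction huw with
  | refl => exact ⟨u.2, .refl⟩
  | @tail p q _ hpq ih =>
    obtain ⟨hp, hup⟩ := ih
    exact ⟨hC p hp q hpq, hup.tail hpq⟩

namespace CutBalanced

theorem reflTransGen_of_rel {R : V → V → Prop} (hR : CutBalanced R) {u v : V} (huv : R u v) :
    ReflTransGen R v u := by
  by_contra hvu
  obtain ⟨p, hp, q, hq, hpq⟩ := hR {w | ReflTransGen R v w} ⟨u, hvu, v, .refl, huv⟩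
  exact hq (hp.tail hpq)

theorem reflTransGen_of_symmGen {R : V → V → Prop} (hR : CutBalanced R) {u v : V}
    (huv : ReflTransGen (SymmGen R) u v) : ReflTransGen R u v :=
  reflTransGen_closed (fun _ _ h ↦ h.elim .single hR.reflTransGen_of_rel) u v huv

theorem reflTransGen_symm {R : V → V → Prop} (hR : CutBalanced R) {u v : V}
    (huv : ReflTransGen R u v) : ReflTransGen R v u := by
  induction huv with
  | refl => exact .refl
  | tail _ hpq ih => exact (hR.reflTransGen_of_rel hpq).trans ih

theorem frequently [Finite V] {τ : Type*} {l : Filter τ} {R : τ → V → V → Prop}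
    (hR : ∀ t, CutBalanced (R t)) : CutBalanced fun u v ↦ ∃ᶠ t in l, R t u v := by
  rintro S ⟨u, hu, v, hv, huv⟩
  have hleave : ∃ᶠ t in l, ∃ p q, p ∈ S ∧ q ∉ S ∧ R t p q := huv.mono fun t ht ↦
    let ⟨p, hp, q, hq, hpq⟩ := hR t S ⟨u, hu, v, hv, ht⟩
    ⟨p, q, hp, hq, hpq⟩
  simp only [frequently_exists_iff_of_finite, frequently_and_distrib_left] at hleave
  obtain ⟨p, q, hp, hq, hpq⟩ := hleave
  exact ⟨p, hp, q, hq, hpq⟩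

theorem restrict {R : V → V → Prop} (hR : CutBalanced R) {C : Set V}
    (hC : ∀ u ∈ C, ∀ v, R u v → v ∈ C) : CutBalanced fun u v : C ↦ R u v := by
  rintro S ⟨u, hu, v, hv, huv⟩
  obtain ⟨_, ⟨p, hp, rfl⟩, q, hq, hpq⟩ := hR (Subtype.val '' S)
    ⟨u, by simpa using hu, v, mem_image_of_mem _ hv, huv⟩
  exact ⟨p, hp, ⟨q, hC p p.2 q hpq⟩, fun h ↦ hq (mem_image_of_mem _ h), hpq⟩

theorem of_finset [Fintype V] [DecidableEq V] {R : V → V → Prop}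
    (hR : ∀ S : Finset V, S.Nonempty → S ≠ Finset.univ →
      (∃ v ∈ S, ∃ u ∈ Sᶜ, R u v) → ∃ u ∈ S, ∃ v ∈ Sᶜ, R u v) : CutBalanced R := by
  classical
  rintro S ⟨u, hu, v, hv, huv⟩
  have hne : S.toFinset.Nonempty := ⟨v, by simpa using hv⟩
  have huniv : S.toFinset ≠ Finset.univ := fun h ↦
    hu (Set.mem_toFinset.1 (h ▸ Finset.mem_univ u))
  simpa using hR S.toFinset hne huniv ⟨v, by simpa using hv, u, by simpa using hu, huv⟩

end CutBalanced

end CutBalance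

section PersistentEdge

variable {ι : Type*}

/-- The edges of the graph `G` of the theorem: `u` influences `v` at arbitrarily late times. As in
the update rule, `a t v u` is the weight that `v` gives to `u`. -/
def PersistentEdge (a : ℕ → ι → ι → ℝ) (u v : ι) : Prop :=
  ∃ᶠ t in atTop, 0 < a t v u

theorem persistentEdge_iff_infinite {a : ℕ → ι → ι → ℝ} {u v : ι} :
    PersistentEdge a u v ↔ {t : ℕ | 0 < a t v u}.Infinite :=
  Nat.frequently_atTop_iff_infinite

theorem persistentEdge_comp_add (a : ℕ → ι → ι → ℝ) (T : ℕ) :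
    PersistentEdge (fun t ↦ a (t + T)) = PersistentEdge a := by
  ext u v
  change (∃ᶠ t in map (· + T) atTop, 0 < a t v u) ↔ ∃ᶠ t in atTop, 0 < a t v u
  rw [map_add_atTop_eq_nat]

theorem eventually_persistentEdge_of_pos [Finite ι] (a : ℕ → ι → ι → ℝ) :
    ∀ᶠ t in atTop, ∀ u v, 0 < a t v u → PersistentEdge a u v := by
  simp only [eventually_all]
  intro u v
  by_cases huv : PersistentEdge a u v
  · exact .of_forall fun _ _ ↦ huv
  · filter_upwards [not_frequently.1 huv] with t ht hpos using absurd hpos ht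

end PersistentEdge

theorem add_mul_le_sum_mul {ι R : Type*} [Fintype ι] [CommRing R] [PartialOrder R]
    [IsOrderedRing R] {w y : ι → R} (hw : ∀ l, 0 ≤ w l) (hsum : ∑ l, w l = 1) {b α δ : R}
    (hb : ∀ l, b ≤ y l) (hδ : 0 ≤ δ) {k : ι} (hα : α ≤ w k) (hk : b + δ ≤ y k) :
    b + α * δ ≤ ∑ l, w l * y l :=
  calc b + α * δ ≤ b + w k * (y k - b) := by
        gcongr
        · exact hw k
        · exact le_sub_iff_add_le'.2 hk
    _ ≤ b + ∑ l, w l * (y l - b) := by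
        gcongr
        exact Finset.single_le_sum (f := fun l ↦ w l * (y l - b))
          (fun l _ ↦ mul_nonneg (hw l) (sub_nonneg.2 (hb l))) (Finset.mem_univ k)
    _ = ∑ l, w l * y l := by
        simp only [mul_sub, Finset.sum_sub_distrib, ← Finset.sum_mul, hsum, one_mul,
          add_sub_cancel]

theorem exists_tendsto_of_monotone_of_antitone {β : Type*} [SemilatticeSup β] [Nonempty β]
    {m M : β → ℝ} (hm : Monotone m) (hM : Antitone M) (hmM : ∀ t, m t ≤ M t) {c : ℝ} (hc : 0 < c)
    (hlift : ∀ t, ∃ s, m t + c * (M t - m t) ≤ m s) :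
    ∃ L, Tendsto m atTop (nhds L) ∧ Tendsto M atTop (nhds L) := by
  have hle : ∀ s t, m s ≤ M t := hm.forall_le_of_antitone hM hmM
  obtain ⟨t₀⟩ := ‹Nonempty β›
  have hbdd : BddAbove (range m) := ⟨M t₀, forall_mem_range.2 fun s ↦ hle s t₀⟩
  have hmL : Tendsto m atTop (nhds (⨆ t, m t)) := tendsto_atTop_ciSup hm hbdd
  have hMU : Tendsto M atTop (nhds (⨅ t, M t)) :=
    tendsto_atTop_ciInf hM ⟨m t₀, forall_mem_range.2 fun t ↦ hle t₀ t⟩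
  have hfrac : (⨆ t, m t) + c * ((⨅ t, M t) - ⨆ t, m t) ≤ ⨆ t, m t :=
    le_of_tendsto' (hmL.add ((hMU.sub hmL).const_mul c)) fun t ↦
      let ⟨s, hs⟩ := hlift t
      hs.trans (le_ciSup hbdd s)
  have hUL : (⨅ t, M t) ≤ ⨆ t, m t := sub_nonpos.1 (nonpos_of_mul_nonpos_right (by linarith) hc)
  have hLU : (⨆ t, m t) ≤ ⨅ t, M t := le_of_tendsto_of_tendsto' hmL hMU hmM
  exact ⟨_, hmL, hLU.antisymm hUL ▸ hMU⟩

/-- `x` evolves by consensus averaging with the row-stochastic weights `a t`, in which positive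
entries and diagonal entries are at least `α`. -/
structure IsConsensusTrajectory {ι : Type*} [Fintype ι] (α : ℝ) (a : ℕ → ι → ι → ℝ)
    (x : ℕ → ι → ℝ) : Prop where
  nonneg : ∀ t i j, 0 ≤ a t i j
  sum_eq_one : ∀ t i, ∑ j, a t i j = 1
  le_of_pos : ∀ t i j, 0 < a t i j → α ≤ a t i j
  le_diag : ∀ t i, α ≤ a t i i
  update : ∀ t i, x (t + 1) i = ∑ j, a t i j * x t j

namespace IsConsensusTrajectory

variable {ι : Type*} [Fintype ι] {α : ℝ} {a : ℕ → ι → ι → ℝ} {x : ℕ → ι → ℝ}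

theorem comp_add (h : IsConsensusTrajectory α a x) (T : ℕ) :
    IsConsensusTrajectory α (fun t ↦ a (t + T)) (fun t ↦ x (t + T)) where
  nonneg t := h.nonneg (t + T)
  sum_eq_one t := h.sum_eq_one (t + T)
  le_of_pos t := h.le_of_pos (t + T)
  le_diag t := h.le_diag (t + T)
  update t i := by rw [add_right_comm, h.update]

theorem restrict (h : IsConsensusTrajectory α a x) {C : Set ι} [Fintype C]
    (hC : ∀ t, ∀ v ∈ C, ∀ u, 0 < a t v u → u ∈ C) :
    IsConsensusTrajectory α (fun t (i j : C) ↦ a t i j) (fun t (i : C) ↦ x t i) := by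
  have hzero (t : ℕ) (i : C) (j : ι) (hj : j ∉ range ((↑) : C → ι)) : a t i j = 0 :=
    ((h.nonneg t i j).eq_of_not_lt fun hpos ↦ hj ⟨⟨j, hC t i i.2 j hpos⟩, rfl⟩).symm
  refine ⟨fun t i j ↦ h.nonneg t i j, fun t i ↦ ?_, fun t i j ↦ h.le_of_pos t i j,
    fun t i ↦ h.le_diag t i, fun t i ↦ ?_⟩
  · rw [← h.sum_eq_one t i]
    exact Fintype.sum_of_injective _ Subtype.val_injective _ _ (hzero t i) fun _ ↦ rfl
  · rw [h.update]
    refine (Fintype.sum_of_injective _ Subtype.val_injective _ _ (fun j hj ↦ ?_) fun _ ↦ rfl).symm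
    rw [hzero t i j hj, zero_mul]

theorem mem_of_convex (h : IsConsensusTrajectory α a x) {J : Set ℝ} (hJ : Convex ℝ J) {t : ℕ}
    {i : ι} (hx : ∀ j, 0 < a t i j → x t j ∈ J) : x (t + 1) i ∈ J := by
  have hmem : ∑ᶠ j, a t i j • x t j ∈ J :=
    hJ.finsum_mem (h.nonneg t i) (by rw [finsum_eq_sum_of_fintype, h.sum_eq_one])
      fun j hj ↦ hx j ((h.nonneg t i j).lt_of_ne' hj)
  rwa [h.update, ← finsum_eq_sum_of_fintype]

theorem forall_mem_of_no_influx (h : IsConsensusTrajectory α a x) {J : Set ℝ} (hJ : Convex ℝ J)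
    {S : Set ι} {t s : ℕ} (hts : t ≤ s)
    (hS : ∀ r, t ≤ r → r < s → ∀ v ∈ S, ∀ u, 0 < a r v u → u ∈ S) (hx : ∀ i ∈ S, x t i ∈ J) :
    ∀ i ∈ S, x s i ∈ J := by
  induction s, hts using Nat.le_induction with
  | base => exact hx
  | succ s hts ih =>
    have hxs := ih fun r htr hrs ↦ hS r htr (hrs.trans s.lt_succ_self)
    exact fun i hi ↦ h.mem_of_convex hJ fun j hj ↦ hxs j (hS s hts s.lt_succ_self i hi j hj)

theorem monotone_iInf (h : IsConsensusTrajectory α a x) [Nonempty ι] :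
    Monotone fun t ↦ ⨅ i, x t i :=
  monotone_nat_of_le_succ fun t ↦ le_ciInf fun _ ↦ h.mem_of_convex (convex_Ici _) fun j _ ↦
    ciInf_le (finite_range (x t)).bddBelow j

theorem antitone_iSup (h : IsConsensusTrajectory α a x) [Nonempty ι] :
    Antitone fun t ↦ ⨆ i, x t i :=
  antitone_nat_of_succ_le fun t ↦ ciSup_le fun _ ↦ h.mem_of_convex (convex_Iic _) fun j _ ↦
    le_ciSup (finite_range (x t)).bddAbove j

theorem exists_cons_forall_le (h : IsConsensusTrajectory α a x)
    (hcb : ∀ t, CutBalanced fun u v ↦ 0 < a t v u) {S : Finset ι} {t : ℕ}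
    (hinflux : ∃ s ≥ t, ∃ u ∉ S, ∃ v ∈ S, 0 < a s v u) {b δ : ℝ} (hδ : 0 ≤ δ)
    (hb : ∀ i, b ≤ x t i) (hS : ∀ i ∈ S, b + δ ≤ x t i) :
    ∃ s j, ∃ hj : j ∉ S, (∀ i, b ≤ x s i) ∧ ∀ i ∈ S.cons j hj, b + α * δ ≤ x s i := by
  classical
  obtain ⟨s, ⟨hts, hin⟩, hfirst⟩ :
      ∃ s, (s ≥ t ∧ ∃ u ∉ S, ∃ v ∈ S, 0 < a s v u) ∧
        ∀ r < s, ¬ (r ≥ t ∧ ∃ u ∉ S, ∃ v ∈ S, 0 < a r v u) :=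
    ⟨Nat.find hinflux, Nat.find_spec hinflux, fun _ ↦ Nat.find_min hinflux⟩
  have hb_at (r : ℕ) (htr : t ≤ r) (i : ι) : b ≤ x r i :=
    h.forall_mem_of_no_influx (convex_Ici b) (S := univ) htr (fun _ _ _ _ _ _ _ ↦ mem_univ _)
      (fun i _ ↦ hb i) i (mem_univ i)
  have hSs : ∀ i ∈ S, b + δ ≤ x s i :=
    h.forall_mem_of_no_influx (convex_Ici (b + δ)) (S := S) hts
      (fun r htr hrs v hv u huv ↦ by_contra fun hu ↦ hfirst r hrs ⟨htr, u, hu, v, hv, huv⟩) hS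
  have hlift {i j : ι} (hi : i ∈ S) (hij : α ≤ a s j i) : b + α * δ ≤ x (s + 1) j := by
    rw [h.update]
    exact add_mul_le_sum_mul (h.nonneg s j) (h.sum_eq_one s j) (hb_at s hts) hδ hij (hSs i hi)
  obtain ⟨i, hi, j, hj, hij⟩ := hcb s S hin
  exact ⟨s + 1, j, hj, hb_at (s + 1) (hts.trans s.le_succ), (Finset.forall_mem_cons hj _).2
    ⟨hlift hi (h.le_of_pos s j i hij), fun k hk ↦ hlift hk (h.le_diag s k)⟩⟩

theorem exists_forall_add_pow_mul_le (h : IsConsensusTrajectory α a x) (hα : 0 ≤ α)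
    (hcb : ∀ t, CutBalanced fun u v ↦ 0 < a t v u)
    (hconn : ∀ u v, ReflTransGen (PersistentEdge a) u v) {b : ℝ} {m : ℕ} :
    ∀ {S : Finset ι} {t : ℕ} {δ : ℝ}, S.Nonempty → S.card + m = Fintype.card ι → 0 ≤ δ →
      (∀ i, b ≤ x t i) → (∀ i ∈ S, b + δ ≤ x t i) → ∃ s, ∀ i, b + α ^ m * δ ≤ x s i := by
  induction m with
  | zero =>
    intro S t δ _ hcard _ _ hS
    have hSuniv : S = Finset.univ := (Finset.card_eq_iff_eq_univ S).1 hcard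
    exact ⟨t, fun i ↦ by simpa using hS i (hSuniv ▸ Finset.mem_univ i)⟩
  | succ m ih =>
    intro S t δ hne hcard hδ hb hS
    obtain ⟨p, hp⟩ := hne
    obtain ⟨q, hq⟩ : ∃ q, q ∉ S := by
      by_contra! hall
      have := (Finset.card_eq_iff_eq_univ S).2 (Finset.eq_univ_of_forall hall)
      omega
    obtain ⟨u, hu, v, hv, huv⟩ := exists_entering_edge_of_reflTransGen (S := S) (hconn q p) hq hp
    obtain ⟨r, htr, hr⟩ := frequently_atTop.1 huv t
    obtain ⟨s, j, hj, hbs, hSs⟩ :=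
      h.exists_cons_forall_le hcb ⟨r, htr, u, hu, v, hv, hr⟩ hδ hb hS
    simp only [pow_succ, mul_assoc]
    exact ih (Finset.cons_nonempty hj) (by rw [Finset.card_cons]; omega) (mul_nonneg hα hδ) hbs hSs

theorem exists_iInf_add_le_iInf (h : IsConsensusTrajectory α a x) [Nonempty ι] (hα : 0 ≤ α)
    (hcb : ∀ t, CutBalanced fun u v ↦ 0 < a t v u)
    (hconn : ∀ u v, ReflTransGen (PersistentEdge a) u v) (t : ℕ) :
    ∃ s, (⨅ i, x t i) + α ^ (Fintype.card ι - 1) * ((⨆ i, x t i) - ⨅ i, x t i) ≤ ⨅ i, x s i := by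
  obtain ⟨p, hp⟩ := exists_eq_ciSup_of_finite (f := x t)
  have hinf : ∀ i, ⨅ j, x t j ≤ x t i := ciInf_le (finite_range (x t)).bddBelow
  have hcard : Finset.card {p} + (Fintype.card ι - 1) = Fintype.card ι := by
    rw [Finset.card_singleton, Nat.add_sub_cancel' Fintype.card_pos]
  obtain ⟨s, hs⟩ := h.exists_forall_add_pow_mul_le hα hcb hconn (S := {p})
    (Finset.singleton_nonempty p) hcard (sub_nonneg.2 (hp ▸ hinf p)) hinf (by simp [hp])
  exact ⟨s, le_ciInf hs⟩

theorem exists_tendsto_of_connected (h : IsConsensusTrajectory α a x) (hα : 0 < α)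
    (hcb : ∀ t, CutBalanced fun u v ↦ 0 < a t v u)
    (hconn : ∀ u v, ReflTransGen (PersistentEdge a) u v) :
    ∃ L, ∀ i, Tendsto (fun t ↦ x t i) atTop (nhds L) := by
  cases isEmpty_or_nonempty ι with
  | inl _ => exact ⟨0, isEmptyElim⟩
  | inr _ =>
    have hinf (t : ℕ) (i : ι) : ⨅ j, x t j ≤ x t i := ciInf_le (finite_range (x t)).bddBelow i
    have hsup (t : ℕ) (i : ι) : x t i ≤ ⨆ j, x t j := le_ciSup (finite_range (x t)).bddAbove i
    obtain ⟨L, hmL, hML⟩ := exists_tendsto_of_monotone_of_antitone h.monotone_iInf h.antitone_iSup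
      (fun t ↦ (hinf t (Classical.arbitrary ι)).trans (hsup t _)) (pow_pos hα _)
      (h.exists_iInf_add_le_iInf hα.le hcb hconn)
    exact ⟨L, fun i ↦ tendsto_of_tendsto_of_tendsto_of_le_of_le hmL hML (hinf · i) (hsup · i)⟩

theorem exists_tendsto_of_reflTransGen (h : IsConsensusTrajectory α a x) (hα : 0 < α)
    (hcb : ∀ t, CutBalanced fun u v ↦ 0 < a t v u) (i : ι) :
    ∃ L, ∀ j, ReflTransGen (PersistentEdge a) i j → Tendsto (fun t ↦ x t j) atTop (nhds L) := by
  have hG : CutBalanced (PersistentEdge a) := .frequently hcb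
  obtain ⟨T, hT⟩ := eventually_atTop.1 (eventually_persistentEdge_of_pos a)
  let C : Set ι := {k | ReflTransGen (PersistentEdge a) i k}
  have hout (t : ℕ) (u : ι) (hu : u ∈ C) (v : ι) (huv : 0 < a (t + T) v u) : v ∈ C :=
    hu.tail (hT (t + T) (T.le_add_left t) u v huv)
  have hin (t : ℕ) (v : ι) (hv : v ∈ C) (u : ι) (huv : 0 < a (t + T) v u) : u ∈ C :=
    hv.trans (hG.reflTransGen_of_rel (hT (t + T) (T.le_add_left t) u v huv))
  have hconn (u v : C) :
      ReflTransGen (PersistentEdge fun t (p q : C) ↦ a (t + T) p q) u v := by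
    have huv : ReflTransGen (PersistentEdge a) u v := (hG.reflTransGen_symm u.2).trans v.2
    rw [← persistentEdge_comp_add a T] at huv
    exact reflTransGen_restrict (fun p hp q hpq ↦ hpq.exists.elim fun t ↦ hout t p hp q) huv
  have := Fintype.ofFinite C
  obtain ⟨L, hL⟩ := ((h.comp_add T).restrict hin).exists_tendsto_of_connected hα
    (fun t ↦ (hcb (t + T)).restrict (hout t)) hconn
  exact ⟨L, fun j hij ↦ (tendsto_add_atTop_iff_nat T).1 (hL ⟨j, hij⟩)⟩

end IsConsensusTrajectory

theorem discrete_cutBalance_components_and_limits_general {ι : Type*} [Fintype ι] {α : ℝ}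
    (hα : 0 < α) {a : ℕ → ι → ι → ℝ} {x : ℕ → ι → ℝ} (h : IsConsensusTrajectory α a x)
    (hcb : ∀ t, CutBalanced fun u v ↦ 0 < a t v u) :
    (∀ i j, ReflTransGen (SymmGen (PersistentEdge a)) i j →
      ReflTransGen (PersistentEdge a) i j) ∧
    ∀ i, ∃ L, ∀ j, ReflTransGen (SymmGen (PersistentEdge a)) i j →
      Tendsto (fun t ↦ x t j) atTop (nhds L) := by
  have hG : CutBalanced (PersistentEdge a) := .frequently hcb
  refine ⟨fun _ _ ↦ hG.reflTransGen_of_symmGen, fun i ↦ ?_⟩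
  obtain ⟨L, hL⟩ := h.exists_tendsto_of_reflTransGen hα hcb i
  exact ⟨L, fun j hij ↦ hL j (hG.reflTransGen_of_symmGen hij)⟩

/-- (Discrete time, graph version.) For a discrete-time
cut-balanced consensus system, let `G` have an edge `(j,i)` when `a_{ij}(t) > 0`
infinitely often. Then every weakly connected component of `G` is strongly
connected, and agents in the same component have the same limit. -/
theorem discrete_cutBalance_components_and_limits
    (n : ℕ) (α : ℝ) (hα : 0 < α)
    (a : ℕ → Fin n → Fin n → ℝ)
    (ha_nonneg : ∀ t i j, 0 ≤ a t i j)
    (ha_stoch : ∀ t i, (∑ j, a t i j) = 1)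
    (ha_lb : ∀ t i j, 0 < a t i j → α ≤ a t i j)
    (ha_diag : ∀ t i, α ≤ a t i i)
    (hcb : ∀ t : ℕ, ∀ S : Finset (Fin n), S.Nonempty → S ≠ Finset.univ →
      ((∃ i ∈ S, ∃ j ∈ Sᶜ, 0 < a t i j) ↔ (∃ i ∈ S, ∃ j ∈ Sᶜ, 0 < a t j i)))
    (x : ℕ → Fin n → ℝ)
    (hx : ∀ t i, x (t + 1) i = ∑ j, a t i j * x t j)
    -- `E u v` : edge from `u` to `v` iff `a_{vu}(t) > 0` for infinitely many `t`
    (E : Fin n → Fin n → Prop)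
    (hE : ∀ u v, E u v ↔ {t : ℕ | 0 < a t v u}.Infinite) :
    (∀ i j : Fin n,
      Relation.ReflTransGen (fun u v => E u v ∨ E v u) i j →
      Relation.ReflTransGen E i j) ∧
    (∀ i j : Fin n,
      Relation.ReflTransGen (fun u v => E u v ∨ E v u) i j →
      ∀ Li Lj : ℝ, Tendsto (fun t => x t i) atTop (nhds Li) →
        Tendsto (fun t => x t j) atTop (nhds Lj) → Li = Lj) := by
  obtain rfl : E = PersistentEdge a := by
    ext u v
    rw [hE, persistentEdge_iff_infinite]
  obtain ⟨hstrong, hlim⟩ := discrete_cutBalance_components_and_limits_general hα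
    ⟨ha_nonneg, ha_stoch, ha_lb, ha_diag, hx⟩ fun t ↦ .of_finset fun S hne hS ↦ (hcb t S hne hS).1
  refine ⟨hstrong, fun i j hij Li Lj hLi hLj ↦ ?_⟩
  obtain ⟨L, hL⟩ := hlim i
  exact (tendsto_nhds_unique hLi (hL i .refl)).trans (tendsto_nhds_unique (hL j hij) hLj)
end

section
/- Let v : [0,∞) → ℝⁿ be measurable with each v_i integrable on every bounded interval, and let x : [0,∞) → ℝⁿ be continuous with x_i(t) = x_i(0) + ∫_0^t v_i(τ) dτ for all i and t. For each t ≥ 0 let p(t) be the permutation of {1,…,n} that sorts x(t) lexicographically: if i < j then either x_{p_i(t)}(t) < x_{p_j(t)}(t), or x_{p_i(t)}(t) = x_{p_j(t)}(t) and p_i(t) < p_j(t). Then for every i and every t ≥ 0, x_{p_i(t)}(t) = x_{p_i(0)}(0) + ∫_0^t v_{p_i(τ)}(τ) dτ. -/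
/-!
The `i`-th smallest entry of a vector is a `1`-Lipschitz function of the vector for the sup norm.
The coordinates `x k` are absolutely continuous, being primitives, so the sorted component
`y t = x (p t i) t` is absolutely continuous too, and is the integral of its derivative.

For each `k`, the functions `y` and `x k` agree on the set `{t | p t i = k}`. Almost every point of
this set is an accumulation point of it, where the derivatives of `y` and `x k`, once they exist,
must agree. Hence `y' t = v (p t i) t` for almost every `t`, even though `p` need not be measurable.
-/

open MeasureTheory Filter

open Set Topology

section OrderStatistics

variable {ι : Type*} [LinearOrder ι] [Finite ι]

lemma exists_le_le_apply_of_injective {f : ι → ι} (hf : Function.Injective f) (i : ι) :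
    ∃ j ≤ i, i ≤ f j := by
  by_contra! h
  have hle : (Iic i).ncard ≤ (Iio i).ncard := ncard_le_ncard_of_injOn f h hf.injOn
  have hlt : (Iio i).ncard < (Iic i).ncard := ncard_lt_ncard (Iio_ssubset_Iic_self)
  exact hlt.not_ge hle

lemma apply_le_apply_of_monotone_comp {κ α : Type*} [Preorder α] {f g : κ → α} {σ τ : ι ≃ κ}
    (hσ : Monotone (f ∘ σ)) (hτ : Monotone (g ∘ τ)) (h : f ≤ g) (i : ι) :
    f (σ i) ≤ g (τ i) := by
  obtain ⟨j, hji, hij⟩ := exists_le_le_apply_of_injective (τ.trans σ.symm).injective i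
  calc f (σ i) ≤ f (τ j) := by simpa using hσ hij
    _ ≤ g (τ j) := h (τ j)
    _ ≤ g (τ i) := hτ hji

end OrderStatistics

lemma dist_apply_le_of_monotone_comp {ι κ : Type*} [LinearOrder ι] [Fintype κ] {f g : κ → ℝ}
    {σ τ : ι ≃ κ} (hσ : Monotone (f ∘ σ)) (hτ : Monotone (g ∘ τ)) (i : ι) :
    dist (f (σ i)) (g (τ i)) ≤ dist f g := by
  have : Finite ι := .of_equiv κ σ.symm
  have hfg (k : κ) : |f k - g k| ≤ dist f g := dist_le_pi_dist f g k
  have hle : f (σ i) ≤ g (τ i) + dist f g :=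
    apply_le_apply_of_monotone_comp (g := fun k => g k + dist f g) hσ (hτ.add_const _)
      (fun k => sub_le_iff_le_add'.mp (abs_sub_le_iff.mp (hfg k)).1) i
  have hge : g (τ i) ≤ f (σ i) + dist f g :=
    apply_le_apply_of_monotone_comp (g := fun k => f k + dist f g) hτ (hσ.add_const _)
      (fun k => sub_le_iff_le_add'.mp (abs_sub_le_iff.mp (hfg k)).2) i
  exact abs_sub_le_iff.mpr ⟨sub_le_iff_le_add'.mpr hle, sub_le_iff_le_add'.mpr hge⟩

section AbsolutelyContinuous

variable {a b : ℝ}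

lemma absolutelyContinuousOnInterval_of_dist_le {X Y : Type*} [PseudoMetricSpace X]
    [PseudoMetricSpace Y] {f : ℝ → X} {g : ℝ → Y} (hg : AbsolutelyContinuousOnInterval g a b)
    (h : ∀ s ∈ uIcc a b, ∀ t ∈ uIcc a b, dist (f s) (f t) ≤ dist (g s) (g t)) :
    AbsolutelyContinuousOnInterval f a b := by
  refine squeeze_zero' (.of_forall fun _ => Finset.sum_nonneg fun _ _ => dist_nonneg) ?_ hg
  filter_upwards [mem_inf_of_right (mem_principal_self _)] with E hE
  exact Finset.sum_le_sum fun m hm => h _ (hE.1 m hm).1 _ (hE.1 m hm).2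

lemma absolutelyContinuousOnInterval_pi {κ : Type*} [Fintype κ] {X : κ → Type*}
    [∀ k, PseudoMetricSpace (X k)] {f : ∀ k, ℝ → X k}
    (hf : ∀ k, AbsolutelyContinuousOnInterval (f k) a b) :
    AbsolutelyContinuousOnInterval (fun t k => f k t) a b := by
  have hsum := tendsto_finsetSum Finset.univ fun k _ => hf k
  rw [Finset.sum_const_zero] at hsum
  refine squeeze_zero (fun _ => Finset.sum_nonneg fun _ _ => dist_nonneg) (fun E => ?_) hsum
  rw [Finset.sum_comm]
  refine Finset.sum_le_sum fun m _ => (dist_pi_le_iff <| by positivity).mpr fun k => ?_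
  exact Finset.single_le_sum (f := fun k => dist (f k (E.2 m).1) (f k (E.2 m).2))
    (fun _ _ => dist_nonneg) (Finset.mem_univ k)

lemma absolutelyContinuousOnInterval_of_eq_add_integral {v x : ℝ → ℝ} {c : ℝ}
    (hv : IntervalIntegrable v volume a b) (hx : ∀ t ∈ uIcc a b, x t = c + ∫ τ in a..t, v τ) :
    AbsolutelyContinuousOnInterval x a b := by
  refine absolutelyContinuousOnInterval_of_dist_le
    (hv.absolutelyContinuousOnInterval_intervalIntegral left_mem_uIcc) fun s hs t ht => ?_
  rw [hx s hs, hx t ht, dist_add_left]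

lemma ae_hasDerivWithinAt_of_eq_add_integral {E : Type*} [NormedAddCommGroup E] [NormedSpace ℝ E]
    [CompleteSpace E] {v x : ℝ → E} {c : E} (hv : IntervalIntegrable v volume a b)
    (hx : ∀ t ∈ uIcc a b, x t = c + ∫ τ in a..t, v τ) :
    ∀ᵐ t, t ∈ uIcc a b → HasDerivWithinAt x (v t) (uIcc a b) t := by
  filter_upwards [hv.ae_hasDerivAt_integral] with t ht hmem
  exact ((ht hmem a left_mem_uIcc).const_add c).hasDerivWithinAt.congr hx (hx t hmem)

lemma integral_eq_sub_of_ae_deriv_eq {f f' : ℝ → ℝ} (hf : AbsolutelyContinuousOnInterval f a b)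
    (hderiv : ∀ᵐ t, t ∈ uIcc a b → deriv f t = f' t) :
    IntervalIntegrable f' volume a b ∧ ∫ t in a..b, f' t = f b - f a := by
  have hae : ∀ᵐ t, t ∈ uIoc a b → deriv f t = f' t :=
    hderiv.mono fun _ h hmem => h (uIoc_subset_uIcc hmem)
  refine ⟨hf.intervalIntegrable_deriv.congr_ae ((ae_restrict_iff' measurableSet_uIoc).mpr hae), ?_⟩
  rw [← intervalIntegral.integral_congr_ae hae, hf.integral_deriv_eq_sub]

end AbsolutelyContinuous

lemma ae_accPt {X : Type*} [TopologicalSpace X] [SecondCountableTopology X] [MeasurableSpace X]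
    (μ : Measure X) [NullSingletonClass μ] (s : Set X) : ∀ᵐ x ∂μ, x ∈ s → AccPt x (𝓟 s) := by
  have hnull : μ {x ∈ s | ¬ AccPt x (𝓟 s)} = 0 := by
    refine measure_null_of_locally_null _ fun x hx => ⟨{x}, ?_, measure_singleton x⟩
    have hbot : 𝓝[s \ {x}] x = ⊥ := by
      simpa only [accPt_principal_iff_nhdsWithin, not_neBot] using hx.2
    have hsingleton : {x} ∈ 𝓝[insert x (s \ {x})] x := by
      simpa only [insert_empty_eq] using
        insert_mem_nhdsWithin_insert (empty_mem_iff_bot.mpr hbot)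
    exact nhdsWithin_mono x ((sep_subset s _).trans (subset_insert_sdiff_singleton x s)) hsingleton
  filter_upwards [measure_eq_zero_iff_ae_notMem.mp hnull] with x hx hxs
  exact not_not.mp fun h => hx ⟨hxs, h⟩

lemma ae_deriv_eq_of_selection {𝕜 E ι : Type*} [NontriviallyNormedField 𝕜]
    [SecondCountableTopology 𝕜] [MeasurableSpace 𝕜] {μ : Measure 𝕜} [NullSingletonClass μ]
    [NormedAddCommGroup E] [NormedSpace 𝕜 E] [Countable ι] {s : Set 𝕜} {f f' : ι → 𝕜 → E}
    {g g' : 𝕜 → E} {k : 𝕜 → ι} (hfg : ∀ t ∈ s, g t = f (k t) t)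
    (hf : ∀ j, ∀ᵐ t ∂μ, t ∈ s → HasDerivWithinAt (f j) (f' j t) s t)
    (hg : ∀ᵐ t ∂μ, t ∈ s → HasDerivWithinAt g (g' t) s t) :
    ∀ᵐ t ∂μ, t ∈ s → g' t = f' (k t) t := by
  have hacc : ∀ᵐ t ∂μ, ∀ j, t ∈ s ∩ k ⁻¹' {j} → AccPt t (𝓟 (s ∩ k ⁻¹' {j})) :=
    ae_all_iff.mpr fun j => ae_accPt μ _
  filter_upwards [ae_all_iff.mpr hf, hg, hacc] with t hft hgt hacct hts
  have hfiber : EqOn g (f (k t)) (s ∩ k ⁻¹' {k t}) := fun r ⟨hrs, hr⟩ =>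
    (hfg r hrs).trans (congrArg (f · r) hr)
  exact (hacct (k t) ⟨hts, rfl⟩).uniqueDiffWithinAt.eq_deriv _
    ((hgt hts).mono inter_subset_left)
    (((hft (k t) hts).mono inter_subset_left).congr hfiber (hfg t hts))

theorem sorted_vector_evolution_general {ι κ : Type*} [LinearOrder ι] [Finite κ] {a b : ℝ}
    {v x : κ → ℝ → ℝ} (hv : ∀ k, IntervalIntegrable (v k) volume a b)
    (hx : ∀ k, ∀ t ∈ uIcc a b, x k t = x k a + ∫ τ in a..t, v k τ)
    {p : ℝ → ι ≃ κ} (hp : ∀ t ∈ uIcc a b, Monotone fun i => x (p t i) t) (i : ι) :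
    IntervalIntegrable (fun τ => v (p τ i) τ) volume a b ∧
      x (p b i) b = x (p a i) a + ∫ τ in a..b, v (p τ i) τ := by
  have := Fintype.ofFinite κ
  have hx_ac : AbsolutelyContinuousOnInterval (fun t k => x k t) a b :=
    absolutelyContinuousOnInterval_pi fun k =>
      absolutelyContinuousOnInterval_of_eq_add_integral (hv k) (hx k)
  have hsorted_ac : AbsolutelyContinuousOnInterval (fun t => x (p t i) t) a b :=
    absolutelyContinuousOnInterval_of_dist_le hx_ac fun s hs t ht =>
      dist_apply_le_of_monotone_comp (f := (x · s)) (g := (x · t)) (hp s hs) (hp t ht) i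
  have hderiv : ∀ᵐ t, t ∈ uIcc a b → deriv (fun t => x (p t i) t) t = v (p t i) t :=
    ae_deriv_eq_of_selection (fun _ _ => rfl)
      (fun k => ae_hasDerivWithinAt_of_eq_add_integral (hv k) (hx k))
      (hsorted_ac.ae_differentiableAt.mono fun _ hdiff ht =>
        (hdiff ht).hasDerivAt.hasDerivWithinAt)
  obtain ⟨hint, hftc⟩ := integral_eq_sub_of_ae_deriv_eq hsorted_ac hderiv
  exact ⟨hint, by rw [hftc, add_sub_cancel]⟩

/-- (Proposition on the evolution of the sorted vector.) If
`x_i(t) = x_i(0) + ∫_0^t v_i` and `p(t)` is the lexicographic sorting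
permutation of `x(t)` (ties broken by the original index), then the sorted
components satisfy `x_{p_i(t)}(t) = x_{p_i(0)}(0) + ∫_0^t v_{p_i(τ)}(τ) dτ`. -/
theorem sorted_vector_evolution
    (n : ℕ)
    (v : Fin n → ℝ → ℝ)
    (hv_meas : ∀ i, Measurable (v i))
    (hv_int : ∀ i (T : ℝ), 0 ≤ T → IntervalIntegrable (v i) volume 0 T)
    (x : Fin n → ℝ → ℝ)
    (hx_cont : ∀ i, ContinuousOn (x i) (Set.Ici (0:ℝ)))
    (hx : ∀ i (t : ℝ), 0 ≤ t → x i t = x i 0 + ∫ τ in (0:ℝ)..t, v i τ)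
    (p : ℝ → Equiv.Perm (Fin n))
    (hp : ∀ t : ℝ, 0 ≤ t → ∀ i j : Fin n, i < j →
      x (p t i) t < x (p t j) t ∨
      (x (p t i) t = x (p t j) t ∧ p t i < p t j)) :
    ∀ i (t : ℝ), 0 ≤ t →
      x (p t i) t = x (p 0 i) 0 + ∫ τ in (0:ℝ)..t, v (p τ i) τ := by
  have hsorted (t : ℝ) (ht : 0 ≤ t) : Monotone fun i => x (p t i) t :=
    monotone_iff_forall_lt.mpr fun i j hij => (hp t ht i j hij).elim le_of_lt (·.1.le)
  intro i t ht
  have hnonneg {s : ℝ} (hs : s ∈ uIcc 0 t) : 0 ≤ s := (uIcc_of_le ht ▸ hs).1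
  exact (sorted_vector_evolution_general (fun k => hv_int k t ht)
    (fun k s hs => hx k s (hnonneg hs)) (fun s hs => hsorted s (hnonneg hs)) i).2
end

section
/- Let v : [0,∞) → ℝ² be measurable with v_1 and v_2 integrable on every bounded interval, and let x : [0,∞) → ℝ² be continuous with x_i(t) = x_i(0) + ∫_0^t v_i(τ) dτ for i = 1, 2. For each t ≥ 0 let p(t) be the permutation of {1,2} that sorts x(t) lexicographically: p_1(t) = 1 if x_1(t) < x_2(t) or (x_1(t) = x_2(t)), and p_1(t) = 2 otherwise. Then for i = 1, 2 and every t ≥ 0, x_{p_i(t)}(t) = x_{p_i(0)}(0) + ∫_0^t v_{p_i(τ)}(τ) dτ; in particular min{x_1(t), x_2(t)} = min{x_1(0), x_2(0)} + ∫_0^t v_{p_1(τ)}(τ) dτ. -/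
open MeasureTheory Filter

/-!
The minimum `m` of two absolutely continuous functions is absolutely continuous, hence almost
everywhere differentiable and the integral of its derivative. At almost every `τ` all three of
`x₁`, `x₂`, `m` are differentiable, with `xᵢ' τ = vᵢ τ`. If `xᵢ` realizes the minimum at `τ`, then
`m - xᵢ ≤ 0` attains its maximum `0` there, so `m' τ = vᵢ τ` by Fermat's theorem. No separate
treatment of ties is needed: at a tie, `m'` agrees with both velocities.
The maximum is minus the minimum of the negatives.
-/

section AbsoluteContinuity

open AbsolutelyContinuousOnInterval

variable {X Y : Type*} [PseudoMetricSpace X] [PseudoMetricSpace Y] {a b : ℝ}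

lemma absolutelyContinuousOnInterval_congr {f g : ℝ → X}
    (hf : AbsolutelyContinuousOnInterval f a b) (hfg : Set.EqOn f g (Set.uIcc a b)) :
    AbsolutelyContinuousOnInterval g a b := by
  refine Tendsto.congr' ?_ hf
  filter_upwards [mem_inf_of_right (mem_principal_self (disjWithin a b))] with E hE
  exact Finset.sum_congr rfl fun i hi => by rw [hfg (hE.1 i hi).1, hfg (hE.1 i hi).2]

lemma absolutelyContinuousOnInterval_lipschitzWith_comp {φ : X → Y} {K : NNReal} {f : ℝ → X}
    (hφ : LipschitzWith K φ) (hf : AbsolutelyContinuousOnInterval f a b) :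
    AbsolutelyContinuousOnInterval (φ ∘ f) a b := by
  have hKf := Tendsto.const_mul (K : ℝ) hf
  rw [mul_zero] at hKf
  refine squeeze_zero (fun _ => Finset.sum_nonneg fun _ _ => dist_nonneg) (fun E => ?_) hKf
  rw [Finset.mul_sum]
  exact Finset.sum_le_sum fun i _ => hφ.dist_le_mul _ _

lemma absolutelyContinuousOnInterval_prodMk {f : ℝ → X} {g : ℝ → Y}
    (hf : AbsolutelyContinuousOnInterval f a b) (hg : AbsolutelyContinuousOnInterval g a b) :
    AbsolutelyContinuousOnInterval (fun s => (f s, g s)) a b := by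
  have hfg := Tendsto.add hf hg
  rw [add_zero] at hfg
  refine squeeze_zero (fun _ => Finset.sum_nonneg fun _ _ => dist_nonneg) (fun E => ?_) hfg
  rw [← Finset.sum_add_distrib]
  exact Finset.sum_le_sum fun i _ => max_le_add_of_nonneg dist_nonneg dist_nonneg

lemma absolutelyContinuousOnInterval_min {f g : ℝ → ℝ}
    (hf : AbsolutelyContinuousOnInterval f a b) (hg : AbsolutelyContinuousOnInterval g a b) :
    AbsolutelyContinuousOnInterval (fun s => min (f s) (g s)) a b :=
  absolutelyContinuousOnInterval_lipschitzWith_comp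
    (φ := fun p : ℝ × ℝ => min p.1 p.2) (f := fun s => (f s, g s)) lipschitzWith_min
    (absolutelyContinuousOnInterval_prodMk hf hg)

end AbsoluteContinuity

lemma hasDerivAt_eq_of_eventuallyLE_of_eq {f g : ℝ → ℝ} {f' g' s : ℝ} (hf : HasDerivAt f f' s)
    (hg : HasDerivAt g g' s) (hle : f ≤ᶠ[nhds s] g) (heq : f s = g s) : f' = g' := by
  have hmax : IsLocalMax (f - g) s := by
    filter_upwards [hle] with r hr
    simpa only [Pi.sub_apply, heq, sub_self, sub_nonpos] using hr
  exact sub_eq_zero.mp (hmax.hasDerivAt_eq_zero (hf.sub hg))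

lemma hasDerivAt_min_eq_ite {x y : ℝ → ℝ} {v w m' s : ℝ} (hx : HasDerivAt x v s)
    (hy : HasDerivAt y w s) (hm : HasDerivAt (fun r => min (x r) (y r)) m' s) :
    m' = if x s ≤ y s then v else w := by
  split_ifs with h
  · exact hasDerivAt_eq_of_eventuallyLE_of_eq hm hx (.of_forall fun _ => min_le_left _ _)
      (min_eq_left h)
  · exact hasDerivAt_eq_of_eventuallyLE_of_eq hm hy (.of_forall fun _ => min_le_right _ _)
      (min_eq_right (le_of_not_ge h))

/-- The function `x` moves with velocity `v` on the interval with endpoints `a` and `b` (in either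
order): it is the integral of `v` started at `x a`. Integrability of `v` is part of the notion, so
that the integrals are not junk values; `x` and `v` are unconstrained outside the interval. -/
structure HasVelocityOn (x v : ℝ → ℝ) (a b : ℝ) : Prop where
  intervalIntegrable : IntervalIntegrable v volume a b
  eq_add_integral : ∀ s ∈ Set.uIcc a b, x s = x a + ∫ τ in a..s, v τ

namespace HasVelocityOn

variable {x y v w : ℝ → ℝ} {a b : ℝ}

protected lemma absolutelyContinuousOnInterval (h : HasVelocityOn x v a b) :
    AbsolutelyContinuousOnInterval x a b := by
  have hconst : AbsolutelyContinuousOnInterval (fun _ => x a) a b :=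
    (LipschitzWith.const (x a)).lipschitzOnWith.absolutelyContinuousOnInterval
  have hint := h.intervalIntegrable.absolutelyContinuousOnInterval_intervalIntegral
    Set.left_mem_uIcc
  exact absolutelyContinuousOnInterval_congr (hconst.fun_add hint)
    fun s hs => (h.eq_add_integral s hs).symm

lemma ae_hasDerivAt (h : HasVelocityOn x v a b) :
    ∀ᵐ s ∂volume.restrict (Set.uIoc a b), HasDerivAt x (v s) s := by
  rw [Set.uIoc, ← restrict_Ioo_eq_restrict_Ioc]
  refine (ae_restrict_iff' measurableSet_Ioo).mpr ?_
  filter_upwards [h.intervalIntegrable.ae_hasDerivAt_integral] with s hderiv hs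
  have hprimitive := hderiv (Set.Ioo_subset_Icc_self hs) a Set.left_mem_uIcc
  refine (hprimitive.const_add (x a)).congr_of_eventuallyEq ?_
  filter_upwards [isOpen_Ioo.mem_nhds hs] with r hr
  exact h.eq_add_integral r (Set.Ioo_subset_Icc_self hr)

lemma of_ae_hasDerivAt (hx : AbsolutelyContinuousOnInterval x a b)
    (hderiv : ∀ᵐ s ∂volume.restrict (Set.uIoc a b), HasDerivAt x (v s) s) :
    HasVelocityOn x v a b := by
  have hv : deriv x =ᵐ[volume.restrict (Set.uIoc a b)] v := hderiv.mono fun _ hs => hs.deriv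
  refine ⟨hx.intervalIntegrable_deriv.congr_ae hv, fun s hs => ?_⟩
  have hsub : Set.uIcc a s ⊆ Set.uIcc a b := Set.uIcc_subset_uIcc_left hs
  have hvs : deriv x =ᵐ[volume.restrict (Set.uIoc a s)] v :=
    ae_restrict_of_ae_restrict_of_subset (Set.uIoc_subset_uIoc_of_uIcc_subset_uIcc hsub) hv
  rw [← intervalIntegral.integral_congr_ae_restrict hvs, (hx.mono hsub).integral_deriv_eq_sub,
    add_sub_cancel]

protected lemma neg (h : HasVelocityOn x v a b) : HasVelocityOn (-x) (-v) a b :=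
  of_ae_hasDerivAt h.absolutelyContinuousOnInterval.neg
    (h.ae_hasDerivAt.mono fun _ hs => hs.neg)

protected lemma min (hx : HasVelocityOn x v a b) (hy : HasVelocityOn y w a b) :
    HasVelocityOn (fun s => min (x s) (y s)) (fun s => if x s ≤ y s then v s else w s) a b := by
  have hac := absolutelyContinuousOnInterval_min hx.absolutelyContinuousOnInterval
    hy.absolutelyContinuousOnInterval
  have hdiff := (ae_restrict_iff' measurableSet_uIoc).mpr <|
    hac.ae_differentiableAt.mono fun _ hs hmem => hs (Set.uIoc_subset_uIcc hmem)
  refine of_ae_hasDerivAt hac ?_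
  filter_upwards [hx.ae_hasDerivAt, hy.ae_hasDerivAt, hdiff] with s hxs hys hms
  rw [← hasDerivAt_min_eq_ite hxs hys hms.hasDerivAt]
  exact hms.hasDerivAt

protected lemma max (hx : HasVelocityOn x v a b) (hy : HasVelocityOn y w a b) :
    HasVelocityOn (fun s => max (x s) (y s)) (fun s => if x s ≤ y s then w s else v s) a b := by
  -- The arguments are swapped so that `-y ≤ -x` reproduces the tie-breaking rule `x ≤ y`.
  have h := (hy.neg.min hx.neg).neg
  convert h using 1 <;> ext s
  · simp only [Pi.neg_apply, min_neg_neg, neg_neg, max_comm]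
  · simp only [Pi.neg_apply, neg_le_neg_iff]
    split_ifs <;> rw [neg_neg]

end HasVelocityOn

/-- (Two-agent sorted evolution, Lemma 2 of the paper.) For
two absolutely continuous functions `x₁, x₂` with velocities `v₁, v₂`, the
pointwise minimum and maximum satisfy the integral equations whose integrand
selects, at each time, the velocity of the function currently realizing the
minimum (resp. maximum), ties going to the function of smaller index: the
sorting permutation `p(t)` has `p₁(t) = 1` iff `x₁(t) ≤ x₂(t)`. -/
theorem sorted_vector_evolution_two
    (v₁ v₂ : ℝ → ℝ)
    (hv_meas : Measurable v₁ ∧ Measurable v₂)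
    (hv_int : ∀ T : ℝ, 0 ≤ T →
      IntervalIntegrable v₁ volume 0 T ∧ IntervalIntegrable v₂ volume 0 T)
    (x₁ x₂ : ℝ → ℝ)
    (hx_cont : ContinuousOn x₁ (Set.Ici (0:ℝ)) ∧ ContinuousOn x₂ (Set.Ici (0:ℝ)))
    (hx₁ : ∀ t : ℝ, 0 ≤ t → x₁ t = x₁ 0 + ∫ τ in (0:ℝ)..t, v₁ τ)
    (hx₂ : ∀ t : ℝ, 0 ≤ t → x₂ t = x₂ 0 + ∫ τ in (0:ℝ)..t, v₂ τ) :
    ∀ t : ℝ, 0 ≤ t →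
      (min (x₁ t) (x₂ t) = min (x₁ 0) (x₂ 0) +
        ∫ τ in (0:ℝ)..t, (if x₁ τ ≤ x₂ τ then v₁ τ else v₂ τ)) ∧
      (max (x₁ t) (x₂ t) = max (x₁ 0) (x₂ 0) +
        ∫ τ in (0:ℝ)..t, (if x₁ τ ≤ x₂ τ then v₂ τ else v₁ τ)) := by
  intro t ht
  have h₁ : HasVelocityOn x₁ v₁ 0 t :=
    ⟨(hv_int t ht).1, fun s hs => hx₁ s (Set.uIcc_of_le ht ▸ hs).1⟩
  have h₂ : HasVelocityOn x₂ v₂ 0 t :=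
    ⟨(hv_int t ht).2, fun s hs => hx₂ s (Set.uIcc_of_le ht ▸ hs).1⟩
  exact ⟨(h₁.min h₂).eq_add_integral t Set.right_mem_uIcc,
    (h₁.max h₂).eq_add_integral t Set.right_mem_uIcc⟩
end

section
/- Let x : [0,∞) → ℝⁿ satisfy, for every i and t, x_i(t) = x_i(0) + ∫_0^t Σ_{j : |x_i(τ) − x_j(τ)| < 1} (x_j(τ) − x_i(τ)) dτ. Then for every i the limit x_i* = lim_{t→∞} x_i(t) exists, and for every pair i, j, either x_i* = x_j* or |x_i* − x_j*| ≥ 1. -/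
open MeasureTheory Filter

/-!
The Lyapunov function is the total disagreement `W = ∑ i j, |x i - x j|`. For symmetric weights
the flow `a i k * (x k - x i)` is antisymmetric, so a double summation by parts turns `W'` into
`∑ i k, (r i - r k) * a i k * (x k - x i)`, where `r i = ∑ j, sign (x i - x j)` ranks the agents.
Ranks increase by at least `1` from an agent to one on its right, whence
`W' ≤ -∑ i k, a i k * |x k - x i|`. As `W ≥ 0`, all flows are integrable on `(0, ∞)`, so every
agent converges. If two limits are closer than the confidence radius, the weight of that pair is
eventually a nonzero constant, so their flow has a limit; being integrable, it tends to `0`, and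
the two limits agree.
-/

open Topology

section AbsolutelyContinuous

variable {X Y : Type*} [PseudoMetricSpace X] [PseudoMetricSpace Y] {a b : ℝ}

lemma absolutelyContinuousOnInterval_congr_s16 {u v : ℝ → X}
    (hv : AbsolutelyContinuousOnInterval v a b) (huv : Set.EqOn u v (Set.uIcc a b)) :
    AbsolutelyContinuousOnInterval u a b := by
  refine Tendsto.congr' (eventually_inf_principal.2 (Eventually.of_forall fun E hE => ?_)) hv
  refine Finset.sum_congr rfl fun i hi => ?_
  rw [huv (hE.1 i hi).1, huv (hE.1 i hi).2]

lemma absolutelyContinuousOnInterval_lipschitz_comp {K : NNReal} {g : X → Y} {u : ℝ → X}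
    (hg : LipschitzWith K g) (hu : AbsolutelyContinuousOnInterval u a b) :
    AbsolutelyContinuousOnInterval (fun t => g (u t)) a b := by
  refine squeeze_zero (fun E => Finset.sum_nonneg fun _ _ => dist_nonneg) (fun E => ?_)
    (by simpa only [mul_zero] using Tendsto.const_mul (K : ℝ) hu)
  rw [Finset.mul_sum]
  exact Finset.sum_le_sum fun _ _ => hg.dist_le_mul _ _

/-- At a zero of `u` both sides vanish: either `|u|` is differentiable with a minimum at `t`, or
`deriv` takes its default value `0`. -/
lemma deriv_abs_comp {u : ℝ → ℝ} {u' t : ℝ} (hu : HasDerivAt u u' t) :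
    deriv (fun s => |u s|) t = (SignType.sign (u t) : ℝ) * u' := by
  rcases eq_or_ne (u t) 0 with hzero | hne
  · have hmin : IsLocalMin (fun s => |u s|) t := Eventually.of_forall fun s => by simp [hzero]
    simp [hmin.deriv_eq_zero, hzero]
  · exact ((hasDerivAt_abs hne).comp t hu).deriv

variable {u : ℝ → ℝ}

lemma absolutelyContinuousOnInterval_abs (hu : AbsolutelyContinuousOnInterval u a b) :
    AbsolutelyContinuousOnInterval (fun t => |u t|) a b :=
  absolutelyContinuousOnInterval_lipschitz_comp lipschitzWith_one_norm hu

lemma ae_deriv_abs_comp (hu : AbsolutelyContinuousOnInterval u a b) :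
    ∀ᵐ t, t ∈ Set.uIoc a b →
      deriv (fun s => |u s|) t = (SignType.sign (u t) : ℝ) * deriv u t := by
  filter_upwards [hu.ae_differentiableAt] with t ht hmem
  exact deriv_abs_comp (ht (Set.uIoc_subset_uIcc hmem)).hasDerivAt

lemma intervalIntegrable_sign_mul_deriv (hu : AbsolutelyContinuousOnInterval u a b) :
    IntervalIntegrable (fun t => (SignType.sign (u t) : ℝ) * deriv u t) volume a b :=
  (absolutelyContinuousOnInterval_abs hu).intervalIntegrable_deriv.congr_ae
    ((ae_restrict_iff' measurableSet_uIoc).2 (ae_deriv_abs_comp hu))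

lemma integral_sign_mul_deriv (hu : AbsolutelyContinuousOnInterval u a b) :
    ∫ t in a..b, (SignType.sign (u t) : ℝ) * deriv u t = |u b| - |u a| := by
  rw [← intervalIntegral.integral_congr_ae (ae_deriv_abs_comp hu),
    (absolutelyContinuousOnInterval_abs hu).integral_deriv_eq_sub]

end AbsolutelyContinuous

section Rank

variable {ι : Type*} [Fintype ι]

lemma sum_sum_sub_mul_of_antisymm {R : Type*} [Ring R] {p : ι → ι → R}
    (hp : ∀ i j, p i j = -p j i) (r : ι → R) :
    ∑ i, ∑ j, (r i - r j) * p i j = 2 * ∑ i, r i * ∑ j, p i j := by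
  have hswap : ∑ i, ∑ j, r j * p i j = -∑ i, ∑ j, r i * p i j := by
    rw [Finset.sum_comm]
    simp only [← Finset.sum_neg_distrib, ← mul_neg, ← hp]
  simp only [sub_mul, Finset.sum_sub_distrib, hswap, ← Finset.mul_sum, sub_neg_eq_add, ← two_mul]

/-- The rank of agent `i` in the profile `y`: the number of agents on its left minus the number of
agents on its right. -/
noncomputable def signRank (y : ι → ℝ) (i : ι) : ℝ := ∑ j, (SignType.sign (y i - y j) : ℝ)

lemma signRank_add_one_le (y : ι → ℝ) {i k : ι} (h : y i < y k) :
    signRank y i + 1 ≤ signRank y k := by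
  have hmono : ∀ j, 0 ≤ (SignType.sign (y k - y j) : ℝ) - SignType.sign (y i - y j) := by
    intro j
    have hle : SignType.sign (y i - y j) ≤ SignType.sign (y k - y j) :=
      SignType.sign.monotone (by linarith)
    revert hle
    cases SignType.sign (y i - y j) <;> cases SignType.sign (y k - y j) <;> simp
  have hterm := Finset.single_le_sum (fun j _ => hmono j) (Finset.mem_univ i)
  rw [Finset.sum_sub_distrib, sub_self, sign_zero, sign_pos (sub_pos.2 h)] at hterm
  simp only [SignType.coe_one, SignType.coe_zero] at hterm
  unfold signRank
  linarith

lemma signRank_sub_mul_le (y : ι → ℝ) (i k : ι) :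
    (signRank y i - signRank y k) * (y k - y i) ≤ -|y k - y i| := by
  rcases lt_trichotomy (y i) (y k) with h | h | h
  · rw [abs_of_pos (sub_pos.2 h)]
    nlinarith [signRank_add_one_le y h]
  · simp [h]
  · rw [abs_of_neg (sub_neg.2 h)]
    nlinarith [signRank_add_one_le y h]

lemma sum_sum_sign_mul_sub_le (y : ι → ℝ) {a : ι → ι → ℝ} (ha_nonneg : ∀ i j, 0 ≤ a i j)
    (ha_symm : ∀ i j, a i j = a j i) :
    ∑ i, ∑ j, (SignType.sign (y i - y j) : ℝ) *
        (∑ k, a i k * (y k - y i) - ∑ k, a j k * (y k - y j)) ≤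
      -∑ i, ∑ k, a i k * |y k - y i| := by
  set F : ι → ℝ := fun i => ∑ k, a i k * (y k - y i)
  have hsign : ∀ i j, (SignType.sign (y i - y j) : ℝ) = -SignType.sign (y j - y i) := fun i j => by
    rw [← neg_sub, Left.sign_neg, SignType.coe_neg]
  have hflow : ∀ i k, a i k * (y k - y i) = -(a k i * (y i - y k)) := fun i k => by
    rw [ha_symm]; ring
  calc ∑ i, ∑ j, (SignType.sign (y i - y j) : ℝ) * (F i - F j)
      = 2 * ∑ i, F i * signRank y i := by
        simp only [mul_comm _ (F _ - F _), sum_sum_sub_mul_of_antisymm hsign, signRank]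
    _ = ∑ i, ∑ k, (signRank y i - signRank y k) * (a i k * (y k - y i)) := by
        simp only [sum_sum_sub_mul_of_antisymm hflow, F, mul_comm (signRank y _)]
    _ ≤ ∑ i, ∑ k, -(a i k * |y k - y i|) := by
        refine Finset.sum_le_sum fun i _ => Finset.sum_le_sum fun k _ => ?_
        rw [mul_left_comm, ← mul_neg]
        exact mul_le_mul_of_nonneg_left (signRank_sub_mul_le y i k) (ha_nonneg i k)
    _ = -∑ i, ∑ k, a i k * |y k - y i| := by simp only [Finset.sum_neg_distrib]

end Rank

section DoubleSum

variable {ι κ : Type*} [Fintype ι] [Fintype κ] {E : Type*} [NormedAddCommGroup E]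
  {μ : Measure ℝ} {s t : ℝ}

lemma intervalIntegrable_fun_sum {f : ι → ℝ → E} (hf : ∀ i, IntervalIntegrable (f i) μ s t) :
    IntervalIntegrable (fun τ => ∑ i, f i τ) μ s t := by
  simpa only [Finset.sum_fn] using IntervalIntegrable.sum Finset.univ fun i _ => hf i

lemma intervalIntegral_sum_sum [NormedSpace ℝ E] {f : ι → κ → ℝ → E}
    (hf : ∀ i j, IntervalIntegrable (f i j) μ s t) :
    ∫ τ in s..t, ∑ i, ∑ j, f i j τ ∂μ = ∑ i, ∑ j, ∫ τ in s..t, f i j τ ∂μ := by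
  rw [intervalIntegral.integral_finsetSum fun i _ => intervalIntegrable_fun_sum (hf i)]
  simp only [intervalIntegral.integral_finsetSum fun j _ => hf _ j]

end DoubleSum

/-- The trajectories `x i` solve on `[0, ∞)`, in integral form, the consensus system
`x i' = ∑ j, a i j * (x j - x i)` with nonnegative symmetric weights `a i j`. The weights are given
as functions of time; for endogenous weights they are evaluated along the trajectory. -/
structure IsConsensusSolution {ι : Type*} [Fintype ι] (a : ι → ι → ℝ → ℝ) (x : ι → ℝ → ℝ) :
    Prop where
  weight_nonneg : ∀ i j t, 0 ≤ a i j t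
  weight_symm : ∀ i j t, a i j t = a j i t
  intervalIntegrable_flow : ∀ i j T, 0 ≤ T →
    IntervalIntegrable (fun t => a i j t * (x j t - x i t)) volume 0 T
  eq_add_integral : ∀ i T, 0 ≤ T →
    x i T = x i 0 + ∫ t in (0 : ℝ)..T, ∑ j, a i j t * (x j t - x i t)

namespace IsConsensusSolution

variable {ι : Type*} [Fintype ι] {a : ι → ι → ℝ → ℝ} {x : ι → ℝ → ℝ}

lemma intervalIntegrable_velocity (h : IsConsensusSolution a x) (i : ι) {T : ℝ} (hT : 0 ≤ T) :
    IntervalIntegrable (fun t => ∑ j, a i j t * (x j t - x i t)) volume 0 T :=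
  intervalIntegrable_fun_sum fun j => h.intervalIntegrable_flow i j T hT

lemma intervalIntegrable_abs_flow (h : IsConsensusSolution a x) (i j : ι) {T : ℝ} (hT : 0 ≤ T) :
    IntervalIntegrable (fun t => a i j t * |x j t - x i t|) volume 0 T := by
  simpa only [abs_mul, abs_of_nonneg (h.weight_nonneg _ _ _)] using
    (h.intervalIntegrable_flow i j T hT).abs

lemma absolutelyContinuousOnInterval (h : IsConsensusSolution a x) (i : ι) {T : ℝ} (hT : 0 ≤ T) :
    AbsolutelyContinuousOnInterval (x i) 0 T := by
  have hprim := (h.intervalIntegrable_velocity i hT).absolutelyContinuousOnInterval_intervalIntegral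
    (c := 0) Set.left_mem_uIcc
  refine absolutelyContinuousOnInterval_congr_s16
    (absolutelyContinuousOnInterval_lipschitz_comp
      (IsometryEquiv.addLeft (x i 0)).isometry.lipschitz hprim)
    fun t ht => ?_
  exact h.eq_add_integral i t (Set.uIcc_of_le hT ▸ ht).1

lemma ae_hasDerivAt (h : IsConsensusSolution a x) (i : ι) {T : ℝ} (hT : 0 ≤ T) :
    ∀ᵐ t, t ∈ Set.Ioc 0 T → HasDerivAt (x i) (∑ j, a i j t * (x j t - x i t)) t := by
  filter_upwards [(h.intervalIntegrable_velocity i hT).ae_hasDerivAt_integral] with t ht hmem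
  have hprim := ht (Set.uIcc_of_le hT ▸ Set.Ioc_subset_Icc_self hmem) 0 Set.left_mem_uIcc
  refine (hprim.const_add (x i 0)).congr_of_eventuallyEq ?_
  filter_upwards [Ioi_mem_nhds hmem.1] with s hs
  exact h.eq_add_integral i s (le_of_lt hs)

lemma ae_sum_sum_sign_mul_deriv_le (h : IsConsensusSolution a x) {T : ℝ} (hT : 0 ≤ T) :
    ∀ᵐ t, t ∈ Set.Ioc 0 T →
      ∑ i, ∑ j, (SignType.sign (x i t - x j t) : ℝ) * deriv (fun s => x i s - x j s) t ≤
        -∑ i, ∑ j, a i j t * |x j t - x i t| := by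
  filter_upwards [ae_all_iff.2 fun i => h.ae_hasDerivAt i hT] with t ht hmem
  simpa only [((ht _ hmem).fun_sub (ht _ hmem)).deriv] using
    sum_sum_sign_mul_sub_le (fun i => x i t) (fun i j => h.weight_nonneg i j t)
      fun i j => h.weight_symm i j t

lemma sum_sum_integral_abs_flow_le (h : IsConsensusSolution a x) {T : ℝ} (hT : 0 ≤ T) :
    ∑ i, ∑ j, ∫ t in (0 : ℝ)..T, a i j t * |x j t - x i t| ≤ ∑ i, ∑ j, |x i 0 - x j 0| := by
  have hac : ∀ i j, AbsolutelyContinuousOnInterval (fun t => x i t - x j t) 0 T := fun i j =>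
    (h.absolutelyContinuousOnInterval i hT).fun_sub (h.absolutelyContinuousOnInterval j hT)
  have hsign := fun i j => intervalIntegrable_sign_mul_deriv (hac i j)
  have hflow := fun i j => h.intervalIntegrable_abs_flow i j hT
  have hdiss := (ae_restrict_iff' measurableSet_Ioc).2 (h.ae_sum_sum_sign_mul_deriv_le hT)
  rw [Measure.restrict_congr_set Ioc_ae_eq_Icc] at hdiss
  have hle : ∑ i, ∑ j, (|x i T - x j T| - |x i 0 - x j 0|) ≤
      -∑ i, ∑ j, ∫ t in (0 : ℝ)..T, a i j t * |x j t - x i t| := by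
    simp only [← integral_sign_mul_deriv (hac _ _)]
    rw [← intervalIntegral_sum_sum hsign, ← intervalIntegral_sum_sum hflow,
      ← intervalIntegral.integral_neg]
    exact intervalIntegral.integral_mono_ae_restrict hT
      (intervalIntegrable_fun_sum fun i => intervalIntegrable_fun_sum (hsign i))
      (intervalIntegrable_fun_sum fun i => intervalIntegrable_fun_sum (hflow i)).neg
      hdiss
  have hnonneg : 0 ≤ ∑ i, ∑ j, |x i T - x j T| := by positivity
  simp only [Finset.sum_sub_distrib] at hle
  linarith

lemma integral_abs_flow_le (h : IsConsensusSolution a x) (i j : ι) {T : ℝ} (hT : 0 ≤ T) :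
    ∫ t in (0 : ℝ)..T, a i j t * |x j t - x i t| ≤ ∑ i, ∑ j, |x i 0 - x j 0| := by
  have hnonneg : ∀ i j, 0 ≤ ∫ t in (0 : ℝ)..T, a i j t * |x j t - x i t| := fun i j =>
    intervalIntegral.integral_nonneg hT fun t _ =>
      mul_nonneg (h.weight_nonneg i j t) (abs_nonneg _)
  calc ∫ t in (0 : ℝ)..T, a i j t * |x j t - x i t|
      ≤ ∑ j, ∫ t in (0 : ℝ)..T, a i j t * |x j t - x i t| :=
        Finset.single_le_sum (fun j _ => hnonneg i j) (Finset.mem_univ j)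
    _ ≤ ∑ i, ∑ j, ∫ t in (0 : ℝ)..T, a i j t * |x j t - x i t| :=
        Finset.single_le_sum (fun i _ => Finset.sum_nonneg fun j _ => hnonneg i j)
          (Finset.mem_univ i)
    _ ≤ ∑ i, ∑ j, |x i 0 - x j 0| := h.sum_sum_integral_abs_flow_le hT

lemma integrableOn_flow (h : IsConsensusSolution a x) (i j : ι) :
    IntegrableOn (fun t => a i j t * (x j t - x i t)) (Set.Ioi 0) := by
  refine integrableOn_Ioi_of_intervalIntegral_norm_bounded (∑ i, ∑ j, |x i 0 - x j 0|) 0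
    (fun T => ?_) tendsto_id ?_
  · rcases le_total 0 T with hT | hT
    · exact (h.intervalIntegrable_flow i j T hT).1
    · simp [Set.Ioc_eq_empty_of_le hT]
  · filter_upwards [eventually_ge_atTop 0] with T hT
    simpa only [norm_mul, Real.norm_eq_abs, abs_of_nonneg (h.weight_nonneg _ _ _), id] using
      h.integral_abs_flow_le i j hT

lemma exists_tendsto (h : IsConsensusSolution a x) (i : ι) :
    ∃ l, Tendsto (x i) atTop (𝓝 l) := by
  have hint := integrable_finsetSum Finset.univ fun j _ => h.integrableOn_flow i j
  refine ⟨_, ((intervalIntegral_tendsto_integral_Ioi 0 hint tendsto_id).const_add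
    (x i 0)).congr' ?_⟩
  filter_upwards [eventually_ge_atTop 0] with t ht
  exact (h.eq_add_integral i t ht).symm

lemma eq_of_tendsto_of_weight_tendsto (h : IsConsensusSolution a x) {i j : ι} {c l m : ℝ}
    (hc : c ≠ 0) (ha : Tendsto (a i j) atTop (𝓝 c)) (hi : Tendsto (x i) atTop (𝓝 l))
    (hj : Tendsto (x j) atTop (𝓝 m)) : l = m := by
  have hflow : c * (m - l) = 0 :=
    IntegrableAtFilter.eq_zero_of_tendsto ⟨_, Ioi_mem_atTop 0, h.integrableOn_flow i j⟩
      (fun s hs => by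
        obtain ⟨b, hb⟩ := mem_atTop_sets.1 hs
        exact measure_mono_top hb Real.volume_Ici)
      (ha.mul (hj.sub hi))
  exact (sub_eq_zero.1 ((mul_eq_zero_iff_left hc).1 hflow)).symm

end IsConsensusSolution

section BoundedConfidence

variable {ι : Type*}

/-- The weights of bounded-confidence dynamics: agents `i` and `j` interact, with strength `w i j`,
while their distance is less than the confidence radius `R`. -/
noncomputable def confidenceWeight (w : ι → ι → ℝ) (R : ℝ) (x : ι → ℝ → ℝ) (i j : ι) (t : ℝ) : ℝ :=
  if |x i t - x j t| < R then w i j else 0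

variable {w : ι → ι → ℝ} {R : ℝ} {x : ι → ℝ → ℝ}

lemma measurable_confidenceWeight (hx : ∀ i, Measurable (x i)) (i j : ι) :
    Measurable (confidenceWeight w R x i j) :=
  Measurable.ite (measurableSet_lt ((hx i).sub (hx j)).abs measurable_const) measurable_const
    measurable_const

lemma abs_confidenceWeight_mul_sub_le (i j : ι) (t : ℝ) :
    |confidenceWeight w R x i j t * (x j t - x i t)| ≤ |w i j| * |R| := by
  unfold confidenceWeight
  split_ifs with hR
  · rw [abs_mul, abs_sub_comm]
    exact mul_le_mul_of_nonneg_left (hR.le.trans (le_abs_self R)) (abs_nonneg _)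
  · simpa using mul_nonneg (abs_nonneg (w i j)) (abs_nonneg R)

lemma intervalIntegrable_confidenceWeight_mul_sub (hx : ∀ i, Measurable (x i)) (i j : ι)
    (s t : ℝ) :
    IntervalIntegrable (fun τ => confidenceWeight w R x i j τ * (x j τ - x i τ)) volume s t :=
  (intervalIntegrable_const (c := |w i j| * |R|)).mono_fun
    ((measurable_confidenceWeight hx i j).mul ((hx j).sub (hx i))).aestronglyMeasurable
    (Eventually.of_forall fun τ =>
      (abs_confidenceWeight_mul_sub_le i j τ).trans (le_abs_self _))

lemma tendsto_confidenceWeight {i j : ι} {l m : ℝ} (hi : Tendsto (x i) atTop (𝓝 l))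
    (hj : Tendsto (x j) atTop (𝓝 m)) (hlt : |l - m| < R) :
    Tendsto (confidenceWeight w R x i j) atTop (𝓝 (w i j)) :=
  tendsto_const_nhds.congr' <|
    ((hi.sub hj).abs.eventually_lt_const hlt).mono fun _ ht => (if_pos ht).symm

theorem boundedConfidence_convergence_and_separation_general [Fintype ι]
    (hw_nonneg : ∀ i j, 0 ≤ w i j) (hw_symm : ∀ i j, w i j = w j i)
    (hx_meas : ∀ i, Measurable (x i))
    (hx : ∀ i (t : ℝ), 0 ≤ t →
      x i t = x i 0 +
        ∫ τ in (0 : ℝ)..t, ∑ j, if |x i τ - x j τ| < R then w i j * (x j τ - x i τ) else 0) :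
    ∃ xs : ι → ℝ,
      (∀ i, Tendsto (x i) atTop (𝓝 (xs i))) ∧
      (∀ i j, w i j ≠ 0 → xs i = xs j ∨ R ≤ |xs i - xs j|) := by
  have hsol : IsConsensusSolution (confidenceWeight w R x) x :=
    { weight_nonneg := fun i j t => by
        unfold confidenceWeight
        split_ifs
        exacts [hw_nonneg i j, le_rfl]
      weight_symm := fun i j t => by
        simp only [confidenceWeight, abs_sub_comm (x i t), hw_symm i j]
      intervalIntegrable_flow := fun i j T _ =>
        intervalIntegrable_confidenceWeight_mul_sub hx_meas i j 0 T
      eq_add_integral := by simpa only [confidenceWeight, ite_mul, zero_mul] using hx }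
  choose xs hxs using hsol.exists_tendsto
  refine ⟨xs, hxs, fun i j hw => or_iff_not_imp_right.2 fun hlt => ?_⟩
  exact hsol.eq_of_tendsto_of_weight_tendsto hw
    (tendsto_confidenceWeight (hxs i) (hxs j) (not_le.1 hlt)) (hxs i) (hxs j)

end BoundedConfidence

/-- (Bounded-confidence opinion dynamics.) For the system
`dx_i/dt = Σ_{j : |x_i − x_j| < 1} (x_j − x_i)` (in integral form), every agent
value converges, and the limits of any two agents are either equal or at
distance at least 1. -/
theorem boundedConfidence_convergence_and_separation
    (n : ℕ)
    (x : Fin n → ℝ → ℝ)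
    (hx_meas : ∀ i, Measurable (x i))
    (hx_int : ∀ i (t : ℝ), 0 ≤ t →
      IntervalIntegrable
        (fun τ => ∑ j, if |x i τ - x j τ| < 1 then x j τ - x i τ else 0) volume 0 t)
    (hx : ∀ i (t : ℝ), 0 ≤ t →
      x i t = x i 0 +
        ∫ τ in (0:ℝ)..t, ∑ j, if |x i τ - x j τ| < 1 then x j τ - x i τ else 0) :
    ∃ xs : Fin n → ℝ,
      (∀ i, Tendsto (x i) atTop (nhds (xs i))) ∧
      (∀ i j, xs i = xs j ∨ 1 ≤ |xs i - xs j|) := by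
  simpa using boundedConfidence_convergence_and_separation_general
    (w := fun _ _ => 1) (R := 1) (by simp) (by simp) hx_meas (by simpa using hx)
end
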